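/- arXiv:2503.01575 — 2 statements merged into one kernel-verified Lean document; each statement's English description precedes it below -/
import Mathlib

section
/- Let ε > 0 and let {a_n}_{n≥1} be an increasing sequence of positive integers such that a_n ≥ n^{1+ε} for all n. Suppose limsup_{n→∞} a_n^{2^{−n}} = ∞. Then for every sequence {c_n}_{n≥1} of positive integers, the sum of the series Σ_{n=1}^∞ 1/(a_n c_n) is irrational. -/
open Filter

/-!
The criterion is the classical one: if `P n = ∏_{i<n} b i` and `R n = ∑_{i≥n} 1 / b i` is the tail,
then `P n * R n` differs from `P n * ∑ 1 / b i` by an integer, so the sum is irrational as soon as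
`P n * R n` takes arbitrarily small values. Replacing `a n * c n` by its increasing rearrangement,
which still dominates `a`, we may assume that `b` is monotone.

Fix a large base `X` and an index `m` at which `b m` is enormous compared with `X ^ 2 ^ m`. Let
`n ≤ m` be the last index at which `P n ≤ 4 * X ^ 2 ^ n / (X * 2 ^ n)`. Such a bound holds at every
`n` with `b n < 2 ^ n`, and it passes from `n` to `n + 1` if `b n < X ^ 2 ^ n / 2`. By maximality,
therefore, `b i ≥ max (2 ^ i) (X ^ 2 ^ n / 2)` on `[n, m)`, and this part of the tail contributes
`O(log X / X)` to `P n * R n`. The part beyond `m` is at most a constant times a negative power of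
`b m`, which absorbs `P n ≤ X ^ 2 ^ m`.
-/

section IrrationalityCriterion

lemma irrational_of_forall_exists_int_mul_sub_mem_Ioo {x : ℝ}
    (h : ∀ η : ℝ, 0 < η → ∃ m n : ℤ, m * x - n ∈ Set.Ioo 0 η) : Irrational x := by
  rintro ⟨r, rfl⟩
  have hden : (0 : ℝ) < r.den := by exact_mod_cast r.pos
  obtain ⟨m, n, hpos, hlt⟩ := h (r.den : ℝ)⁻¹ (inv_pos.2 hden)
  have hint : (r.den : ℝ) * (m * r - n) = ((m * r.num - r.den * n : ℤ) : ℝ) := by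
    have hr : (r : ℝ) * r.den = r.num := by exact_mod_cast Rat.mul_den_eq_num r
    push_cast
    rw [← hr]
    ring
  have hpos' : (0 : ℝ) < ((m * r.num - r.den * n : ℤ) : ℝ) := hint ▸ mul_pos hden hpos
  have hlt' : ((m * r.num - r.den * n : ℤ) : ℝ) < 1 := by
    rw [← hint, ← mul_inv_cancel₀ hden.ne']
    gcongr
  norm_cast at hpos' hlt'
  omega

lemma exists_int_eq_prod_mul_sum_inv {ι : Type*} (s : Finset ι) {b : ι → ℕ}
    (hb : ∀ i ∈ s, 0 < b i) :
    ∃ z : ℤ, (∏ i ∈ s, (b i : ℝ)) * ∑ i ∈ s, (b i : ℝ)⁻¹ = z := by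
  classical
  refine ⟨∑ i ∈ s, ∏ j ∈ s.erase i, (b j : ℤ), ?_⟩
  push_cast
  rw [Finset.mul_sum]
  refine Finset.sum_congr rfl fun i hi => ?_
  have hi₀ : (b i : ℝ) ≠ 0 := by exact_mod_cast (hb i hi).ne'
  rw [← Finset.prod_erase_mul s _ hi, mul_inv_cancel_right₀ hi₀]

lemma irrational_tsum_inv_of_forall_exists_prod_mul_tsum_lt {b : ℕ → ℕ} (hb : ∀ n, 0 < b n)
    (hs : Summable fun n => (b n : ℝ)⁻¹)
    (h : ∀ η : ℝ, 0 < η →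
      ∃ n, (∏ i ∈ Finset.range n, (b i : ℝ)) * ∑' i, (b (i + n) : ℝ)⁻¹ < η) :
    Irrational (∑' n, (b n : ℝ)⁻¹) := by
  have hb' : ∀ n, (0 : ℝ) < b n := fun n => by exact_mod_cast hb n
  refine irrational_of_forall_exists_int_mul_sub_mem_Ioo fun η hη => ?_
  obtain ⟨n, hn⟩ := h η hη
  obtain ⟨z, hz⟩ := exists_int_eq_prod_mul_sum_inv (Finset.range n) fun i _ => hb i
  have htail : (∏ i ∈ Finset.range n, (b i : ℝ)) * ∑' i, (b (i + n) : ℝ)⁻¹ =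
      ((∏ i ∈ Finset.range n, (b i : ℤ) : ℤ) : ℝ) * ∑' i, (b i : ℝ)⁻¹ - z := by
    push_cast
    rw [← hs.sum_add_tsum_nat_add n, ← hz]
    ring
  have htail_pos : 0 < ∑' i, (b (i + n) : ℝ)⁻¹ :=
    ((summable_nat_add_iff n).2 hs).tsum_pos (fun i => (inv_pos.2 (hb' _)).le) 0
      (inv_pos.2 (hb' _))
  exact ⟨∏ i ∈ Finset.range n, (b i : ℤ), z, htail ▸
    ⟨mul_pos (Finset.prod_pos fun i _ => hb' i) htail_pos, hn⟩⟩

end IrrationalityCriterion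

section PartialProducts

lemma mul_self_add_self_le_two_mul_two_pow (n : ℕ) : n * n + n ≤ 2 * 2 ^ n := by
  induction n with
  | zero => norm_num
  | succ n ih =>
    have : n < 2 ^ n := n.lt_two_pow_self
    rw [pow_succ]
    linarith

variable {b : ℕ → ℝ} {X : ℝ} {m n : ℕ}

lemma prod_range_le_of_lt_two_pow (hb : ∀ i, 0 ≤ b i) (hmono : Monotone b) (hX : 4 ≤ X)
    (hn : b n < 2 ^ n) :
    X * 2 ^ n * ∏ i ∈ Finset.range n, b i ≤ 4 * X ^ 2 ^ n := by
  have hprod : ∏ i ∈ Finset.range n, b i ≤ 2 ^ (n * n) :=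
    calc ∏ i ∈ Finset.range n, b i ≤ ∏ _i ∈ Finset.range n, (2 : ℝ) ^ n :=
          Finset.prod_le_prod (fun i _ => hb i) fun i hi =>
            (hmono (Finset.mem_range.1 hi).le).trans hn.le
      _ = 2 ^ (n * n) := by simp [← pow_mul]
  have hpow : X * 4 ^ 2 ^ n ≤ 4 * X ^ 2 ^ n := by
    obtain ⟨k, hk⟩ := Nat.exists_eq_succ_of_ne_zero (pow_ne_zero n two_ne_zero : 2 ^ n ≠ 0)
    have : (4 : ℝ) ^ k ≤ X ^ k := by gcongr
    rw [hk, pow_succ', pow_succ']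
    nlinarith
  calc X * 2 ^ n * ∏ i ∈ Finset.range n, b i ≤ X * 2 ^ n * 2 ^ (n * n) := by gcongr
    _ = X * 2 ^ (n * n + n) := by ring
    _ ≤ X * 2 ^ (2 * 2 ^ n) := by
        gcongr
        exacts [one_le_two, mul_self_add_self_le_two_mul_two_pow n]
    _ = X * 4 ^ 2 ^ n := by rw [pow_mul]; norm_num
    _ ≤ 4 * X ^ 2 ^ n := hpow

lemma prod_range_succ_le_of_two_mul_lt (hb : ∀ i, 0 ≤ b i) (hX : 0 ≤ X)
    (hprod : X * 2 ^ n * ∏ i ∈ Finset.range n, b i ≤ 4 * X ^ 2 ^ n)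
    (hn : 2 * b n < X ^ 2 ^ n) :
    X * 2 ^ (n + 1) * ∏ i ∈ Finset.range (n + 1), b i ≤ 4 * X ^ 2 ^ (n + 1) :=
  have := hb n
  calc X * 2 ^ (n + 1) * ∏ i ∈ Finset.range (n + 1), b i
      = (X * 2 ^ n * ∏ i ∈ Finset.range n, b i) * (2 * b n) := by
        rw [Finset.prod_range_succ]; ring
    _ ≤ 4 * X ^ 2 ^ n * X ^ 2 ^ n := by gcongr
    _ = 4 * X ^ 2 ^ (n + 1) := by ring

lemma exists_prod_range_le_and_two_pow_le (hb : ∀ i, 0 ≤ b i) (hmono : Monotone b) (hX : 4 ≤ X)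
    (hm : X ^ 2 ^ m ≤ 2 * b m) :
    ∃ n ≤ m, X * 2 ^ n * ∏ i ∈ Finset.range n, b i ≤ 4 * X ^ 2 ^ n ∧
      X ^ 2 ^ n ≤ 2 * b n ∧ ∀ i, n ≤ i → i ≤ m → 2 ^ i ≤ b i := by
  classical
  set Good : ℕ → Prop := fun n => X * 2 ^ n * ∏ i ∈ Finset.range n, b i ≤ 4 * X ^ 2 ^ n
  have good_zero : Good 0 := by
    simp only [Good, pow_zero, Finset.prod_range_zero, mul_one, pow_one]
    linarith
  set n := Nat.findGreatest Good m
  have hnm : n ≤ m := Nat.findGreatest_le m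
  have good_n : Good n := Nat.findGreatest_spec (Nat.zero_le m) good_zero
  have not_good : ∀ i, n < i → i ≤ m → ¬ Good i := fun i => Nat.findGreatest_is_greatest
  have hbn : X ^ 2 ^ n ≤ 2 * b n := by
    rcases hnm.eq_or_lt with h | h
    · rwa [h]
    · by_contra! hlt
      exact not_good (n + 1) n.lt_succ_self h
        (prod_range_succ_le_of_two_mul_lt hb (by linarith) good_n hlt)
  refine ⟨n, hnm, good_n, hbn, fun i hni him => ?_⟩
  rcases hni.eq_or_lt with rfl | hlt
  · have : (2 : ℝ) * 2 ^ n ≤ 2 * b n :=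
      calc (2 : ℝ) * 2 ^ n = 2 ^ (n + 1) := by ring
        _ ≤ 2 ^ 2 ^ n := pow_le_pow_right₀ one_le_two n.lt_two_pow_self
        _ ≤ X ^ 2 ^ n := by gcongr; linarith
        _ ≤ 2 * b n := hbn
    linarith
  · by_contra! hslow
    exact not_good i hlt him (prod_range_le_of_lt_two_pow hb hmono hX hslow)

lemma sum_inv_le_of_two_pow_le {s : Finset ℕ} {T : ℕ} (hT : ∀ i ∈ s, 2 ^ T ≤ 2 * b i)
    (hb : ∀ i ∈ s, 2 ^ i ≤ b i) :
    ∑ i ∈ s, (b i)⁻¹ ≤ (2 * T + 2) / 2 ^ T := by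
  have hlow : ∑ i ∈ s ∩ Finset.range T, (b i)⁻¹ ≤ T * (2 / 2 ^ T) := by
    have hcard : (s ∩ Finset.range T).card ≤ T := by
      simpa using Finset.card_le_card (Finset.inter_subset_right (s₁ := s) (s₂ := Finset.range T))
    calc ∑ i ∈ s ∩ Finset.range T, (b i)⁻¹ ≤ (s ∩ Finset.range T).card • (2 / 2 ^ T : ℝ) := by
          refine Finset.sum_le_card_nsmul _ _ _ fun i hi => ?_
          rw [← inv_div]
          refine inv_anti₀ (by positivity) ?_
          rw [div_le_iff₀' two_pos]
          exact hT i (Finset.mem_inter.1 hi).1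
      _ ≤ T * (2 / 2 ^ T) := by
          rw [nsmul_eq_mul]
          gcongr
  have hhigh : ∑ i ∈ s \ Finset.range T, (b i)⁻¹ ≤ 2 / 2 ^ T := by
    obtain ⟨N, hN⟩ := s.exists_nat_subset_range
    calc ∑ i ∈ s \ Finset.range T, (b i)⁻¹ ≤ ∑ i ∈ s \ Finset.range T, (1 / 2 : ℝ) ^ i := by
          refine Finset.sum_le_sum fun i hi => ?_
          rw [one_div, inv_pow]
          exact inv_anti₀ (by positivity) (hb i (Finset.mem_sdiff.1 hi).1)
      _ ≤ ∑ i ∈ Finset.Ico T N, (1 / 2 : ℝ) ^ i := by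
          refine Finset.sum_le_sum_of_subset_of_nonneg (fun i hi => ?_) fun _ _ _ => by positivity
          obtain ⟨his, hiT⟩ := Finset.mem_sdiff.1 hi
          exact Finset.mem_Ico.2 ⟨by simpa using hiT, Finset.mem_range.1 (hN his)⟩
      _ ≤ (1 / 2) ^ T / (1 - 1 / 2) := geom_sum_Ico_le_of_lt_one (by norm_num) (by norm_num)
      _ = 2 / 2 ^ T := by rw [one_div_pow]; ring
  calc ∑ i ∈ s, (b i)⁻¹ = ∑ i ∈ s ∩ Finset.range T, (b i)⁻¹ + ∑ i ∈ s \ Finset.range T, (b i)⁻¹ :=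
        (Finset.sum_inter_add_sum_sdiff _ _ _).symm
    _ ≤ T * (2 / 2 ^ T) + 2 / 2 ^ T := add_le_add hlow hhigh
    _ = (2 * T + 2) / 2 ^ T := by ring

lemma exists_prod_range_mul_sum_Ico_inv_le (hb : ∀ i, 0 ≤ b i) (hmono : Monotone b) {K : ℕ}
    (hK : 2 ≤ K) (hm : (2 ^ K) ^ 2 ^ m ≤ 2 * b m) :
    ∃ n ≤ m, ∏ i ∈ Finset.range n, b i ≤ (2 ^ K) ^ 2 ^ m ∧
      (∏ i ∈ Finset.range n, b i) * ∑ i ∈ Finset.Ico n m, (b i)⁻¹ ≤ 8 * (K + 1) / 2 ^ K := by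
  have hX : (4 : ℝ) ≤ 2 ^ K :=
    calc (4 : ℝ) = 2 ^ 2 := by norm_num
      _ ≤ 2 ^ K := pow_le_pow_right₀ one_le_two hK
  obtain ⟨n, hnm, hprod, hbn, hfast⟩ := exists_prod_range_le_and_two_pow_le hb hmono hX hm
  have hprod_nonneg : 0 ≤ ∏ i ∈ Finset.range n, b i := Finset.prod_nonneg fun i _ => hb i
  have h2n : (1 : ℝ) ≤ 2 ^ n := one_le_pow₀ one_le_two
  refine ⟨n, hnm, ?_, ?_⟩
  · have hn : ∏ i ∈ Finset.range n, b i ≤ (2 ^ K) ^ 2 ^ n := by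
      have : 4 * 1 * ∏ i ∈ Finset.range n, b i ≤ 2 ^ K * 2 ^ n * ∏ i ∈ Finset.range n, b i := by
        gcongr
      linarith
    exact hn.trans (pow_le_pow_right₀ (by linarith) (Nat.pow_le_pow_right two_pos hnm))
  · have hsum := sum_inv_le_of_two_pow_le (s := Finset.Ico n m) (T := K * 2 ^ n)
      (fun i hi => by
        rw [pow_mul]
        linarith [hmono (Finset.mem_Ico.1 hi).1])
      (fun i hi => hfast i (Finset.mem_Ico.1 hi).1 (Finset.mem_Ico.1 hi).2.le)
    rw [pow_mul] at hsum
    push_cast at hsum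
    calc (∏ i ∈ Finset.range n, b i) * ∑ i ∈ Finset.Ico n m, (b i)⁻¹
        ≤ (4 * (2 ^ K) ^ 2 ^ n / (2 ^ K * 2 ^ n)) *
          ((2 * (K * 2 ^ n) + 2) / (2 ^ K) ^ 2 ^ n) := by
          have : ∏ i ∈ Finset.range n, b i ≤ 4 * (2 ^ K) ^ 2 ^ n / (2 ^ K * 2 ^ n) :=
            (le_div_iff₀' (by positivity)).2 hprod
          gcongr
          exact Finset.sum_nonneg fun i _ => inv_nonneg.2 (hb i)
      _ = 8 * (K + 1 / 2 ^ n) / 2 ^ K := by field_simp; ring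
      _ ≤ 8 * (K + 1) / 2 ^ K := by gcongr; exact div_le_one_of_le₀ h2n (by positivity)

end PartialProducts

section Tail

variable {b : ℕ → ℝ} {p : ℝ}

lemma summable_rpow_neg_of_le {a b : ℕ → ℝ} (ha : ∀ n, 0 < a n) (hab : ∀ n, a n ≤ b n)
    (hp : 0 ≤ p) (hs : Summable fun n => a n ^ (-p)) : Summable fun n => b n ^ (-p) :=
  hs.of_nonneg_of_le (fun n => Real.rpow_nonneg ((ha n).le.trans (hab n)) _) fun n =>
    Real.rpow_le_rpow_of_nonpos (ha n) (hab n) (neg_nonpos.2 hp)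

lemma summable_inv_of_summable_rpow_neg (hb : ∀ n, 1 ≤ b n) (hp : p ≤ 1)
    (hs : Summable fun n => b n ^ (-p)) : Summable fun n => (b n)⁻¹ :=
  hs.of_nonneg_of_le (fun n => inv_nonneg.2 (zero_le_one.trans (hb n))) fun n => by
    rw [← Real.rpow_neg_one]
    exact Real.rpow_le_rpow_of_exponent_le (hb n) (neg_le_neg hp)

lemma summable_rpow_neg_of_rpow_le {α : ℝ} (hb : ∀ n : ℕ, ((n + 1 : ℕ) : ℝ) ^ α ≤ b n)
    (hp : 0 ≤ p) (hαp : 1 < α * p) : Summable fun n => b n ^ (-p) := by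
  refine summable_rpow_neg_of_le (fun n => by positivity) hb hp ?_
  have hs : Summable fun n : ℕ => ((n + 1 : ℕ) : ℝ) ^ (-(α * p)) :=
    (summable_nat_add_iff 1).2 (Real.summable_nat_rpow.2 (neg_lt_neg hαp))
  refine hs.congr fun n => ?_
  rw [← Real.rpow_mul (by positivity), mul_neg]

lemma tsum_nat_add_inv_le (hb : ∀ n, 0 < b n) (hmono : Monotone b) (hp : p ≤ 1)
    (hs : Summable fun n => b n ^ (-p)) (m : ℕ) :
    ∑' i, (b (i + m))⁻¹ ≤ b m ^ (p - 1) * ∑' i, b i ^ (-p) := by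
  have hsm : Summable fun i => b (i + m) ^ (-p) := (summable_nat_add_iff m).2 hs
  have hterm : ∀ i, (b (i + m))⁻¹ ≤ b m ^ (p - 1) * b (i + m) ^ (-p) := fun i =>
    calc (b (i + m))⁻¹ = b (i + m) ^ (p - 1) * b (i + m) ^ (-p) := by
          rw [← Real.rpow_add (hb _), ← Real.rpow_neg_one]
          ring_nf
      _ ≤ b m ^ (p - 1) * b (i + m) ^ (-p) := by
          have := hb (i + m)
          gcongr ?_ * _
          exact Real.rpow_le_rpow_of_nonpos (hb m) (hmono (Nat.le_add_left m i))
            (sub_nonpos.2 hp)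
  have hinv : Summable fun i => (b (i + m))⁻¹ :=
    (hsm.mul_left _).of_nonneg_of_le (fun i => (inv_pos.2 (hb _)).le) hterm
  have htail : ∑' i, b (i + m) ^ (-p) ≤ ∑' i, b i ^ (-p) := by
    rw [← hs.sum_add_tsum_nat_add m]
    exact le_add_of_nonneg_left (Finset.sum_nonneg fun i _ => Real.rpow_nonneg (hb i).le _)
  calc ∑' i, (b (i + m))⁻¹ ≤ ∑' i, b m ^ (p - 1) * b (i + m) ^ (-p) :=
        hinv.tsum_le_tsum hterm (hsm.mul_left _)
    _ = b m ^ (p - 1) * ∑' i, b (i + m) ^ (-p) := tsum_mul_left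
    _ ≤ b m ^ (p - 1) * ∑' i, b i ^ (-p) :=
        mul_le_mul_of_nonneg_left htail (Real.rpow_nonneg (hb m).le _)

lemma pow_mul_tsum_nat_add_inv_le (hb : ∀ n, 0 < b n) (hmono : Monotone b) (hp : p ≤ 1)
    (hs : Summable fun n => b n ^ (-p)) {X Y : ℝ} {m : ℕ} (hX : 0 ≤ X) (hY : 0 < Y)
    (hXY : X * Y ^ (p - 1) ≤ 1) (hm : Y ^ 2 ^ m ≤ b m) :
    X ^ 2 ^ m * ∑' i, (b (i + m))⁻¹ ≤ X * Y ^ (p - 1) * ∑' i, b i ^ (-p) := by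
  have hC : 0 ≤ ∑' i, b i ^ (-p) := tsum_nonneg fun i => Real.rpow_nonneg (hb i).le _
  have hbm : b m ^ (p - 1) ≤ (Y ^ (p - 1)) ^ 2 ^ m := by
    rw [Real.rpow_pow_comm hY.le]
    exact Real.rpow_le_rpow_of_nonpos (pow_pos hY _) hm (sub_nonpos.2 hp)
  calc X ^ 2 ^ m * ∑' i, (b (i + m))⁻¹
      ≤ X ^ 2 ^ m * (b m ^ (p - 1) * ∑' i, b i ^ (-p)) := by
        gcongr
        exact tsum_nat_add_inv_le hb hmono hp hs m
    _ ≤ X ^ 2 ^ m * ((Y ^ (p - 1)) ^ 2 ^ m * ∑' i, b i ^ (-p)) := by gcongr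
    _ = (X * Y ^ (p - 1)) ^ 2 ^ m * ∑' i, b i ^ (-p) := by rw [mul_pow, mul_assoc]
    _ ≤ X * Y ^ (p - 1) * ∑' i, b i ^ (-p) := by
        gcongr
        exact pow_le_of_le_one (by positivity) hXY (by positivity)

lemma tsum_nat_add_eq_sum_Ico_add {f : ℕ → ℝ} (hf : Summable f) {n m : ℕ} (hnm : n ≤ m) :
    ∑' i, f (i + n) = ∑ i ∈ Finset.Ico n m, f i + ∑' i, f (i + m) := by
  have hn := hf.sum_add_tsum_nat_add n
  have hm := hf.sum_add_tsum_nat_add m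
  have hsum := Finset.sum_range_add_sum_Ico f hnm
  linarith

end Tail

section Monotone

lemma exists_two_le_and_mul_div_two_pow_lt {η : ℝ} (hη : 0 < η) :
    ∃ K : ℕ, 2 ≤ K ∧ (8 * (K + 1) / 2 ^ K : ℝ) < η := by
  have hlim : Tendsto (fun K : ℕ => (8 * (K + 1) / 2 ^ K : ℝ)) atTop (nhds 0) := by
    have h (k : ℕ) := tendsto_pow_const_div_const_pow_of_one_lt k (one_lt_two (α := ℝ))
    have hsum := ((h 1).add (h 0)).const_mul 8
    rw [add_zero, mul_zero] at hsum
    exact hsum.congr fun K => by ring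
  exact ((eventually_ge_atTop 2).and (hlim.eventually_lt_const hη)).exists

lemma exists_mul_rpow_sub_one_lt {p : ℝ} (hp : p < 1) (X C : ℝ) {η : ℝ} (hη : 0 < η) :
    ∃ Y, 0 < Y ∧ X ≤ Y ∧ X * Y ^ (p - 1) ≤ 1 ∧ X * Y ^ (p - 1) * C < η := by
  have hlim : Tendsto (fun Y : ℝ => X * Y ^ (p - 1)) atTop (nhds 0) := by
    simpa using (tendsto_rpow_neg_atTop (sub_pos.2 hp)).const_mul X
  have hlimC : Tendsto (fun Y : ℝ => X * Y ^ (p - 1) * C) atTop (nhds 0) := by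
    simpa using hlim.mul_const C
  exact ((eventually_gt_atTop 0).and <| (eventually_ge_atTop X).and <|
    (hlim.eventually_le_const one_pos).and (hlimC.eventually_lt_const hη)).exists

lemma exists_prod_range_mul_tsum_inv_lt {b : ℕ → ℝ} (hb : ∀ n, 1 ≤ b n) (hmono : Monotone b)
    {p : ℝ} (hp : p < 1) (hs : Summable fun n => b n ^ (-p))
    (hbig : ∀ X : ℝ, ∃ m, X ^ 2 ^ m ≤ b m) {η : ℝ} (hη : 0 < η) :
    ∃ n, (∏ i ∈ Finset.range n, b i) * ∑' i, (b (i + n))⁻¹ < η := by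
  have hpos : ∀ n, 0 < b n := fun n => one_pos.trans_le (hb n)
  obtain ⟨K, hK, hKη⟩ := exists_two_le_and_mul_div_two_pow_lt (half_pos hη)
  obtain ⟨Y, hY, hXY, hXY₁, hXYη⟩ :=
    exists_mul_rpow_sub_one_lt hp (2 ^ K) (∑' i, b i ^ (-p)) (half_pos hη)
  obtain ⟨m, hm⟩ := hbig Y
  have hXm : ((2 : ℝ) ^ K) ^ 2 ^ m ≤ 2 * b m :=
    calc ((2 : ℝ) ^ K) ^ 2 ^ m ≤ Y ^ 2 ^ m := by gcongr
      _ ≤ 2 * b m := by linarith [hpos m]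
  obtain ⟨n, hnm, hprod, hnear⟩ :=
    exists_prod_range_mul_sum_Ico_inv_le (fun i => (hpos i).le) hmono hK hXm
  have hfar : (∏ i ∈ Finset.range n, b i) * ∑' i, (b (i + m))⁻¹ < η / 2 :=
    calc (∏ i ∈ Finset.range n, b i) * ∑' i, (b (i + m))⁻¹
        ≤ (2 ^ K) ^ 2 ^ m * ∑' i, (b (i + m))⁻¹ := by
          gcongr
          exact tsum_nonneg fun i => (inv_pos.2 (hpos _)).le
      _ ≤ 2 ^ K * Y ^ (p - 1) * ∑' i, b i ^ (-p) :=
          pow_mul_tsum_nat_add_inv_le hpos hmono hp.le hs (by positivity) hY hXY₁ hm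
      _ < η / 2 := hXYη
  refine ⟨n, ?_⟩
  rw [tsum_nat_add_eq_sum_Ico_add (summable_inv_of_summable_rpow_neg hb hp.le hs) hnm, mul_add]
  linarith

theorem irrational_tsum_inv_of_monotone {b : ℕ → ℕ} (hb : ∀ n, 0 < b n) (hmono : Monotone b)
    {p : ℝ} (hp : p < 1) (hs : Summable fun n => (b n : ℝ) ^ (-p))
    (hbig : ∀ X : ℝ, ∃ m, X ^ 2 ^ m ≤ b m) : Irrational (∑' n, (b n : ℝ)⁻¹) := by
  have hb' : ∀ n, (1 : ℝ) ≤ b n := fun n => by exact_mod_cast hb n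
  exact irrational_tsum_inv_of_forall_exists_prod_mul_tsum_lt hb
    (summable_inv_of_summable_rpow_neg hb' hp.le hs)
    fun _ hη => exists_prod_range_mul_tsum_inv_lt hb' (Nat.mono_cast.comp hmono) hp hs hbig hη

end Monotone

section Rearrangement

lemma exists_equiv_strictMono_comp {ι β : Type*} [Infinite ι] [LinearOrder β] {f : ι → β}
    (hf : Function.Injective f) (hfin : ∀ i, {j | f j < f i}.Finite) :
    ∃ e : ℕ ≃ ι, StrictMono (f ∘ e) := by
  classical
  let rank : ι → ℕ := fun i => {j | f j < f i}.ncard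
  have rank_lt : ∀ {i j}, f i < f j → rank i < rank j := fun {i j} hij =>
    Set.ncard_lt_ncard ⟨fun k hk => lt_trans hk hij, fun h => lt_irrefl _ (h hij)⟩ (hfin j)
  have rank_injective : Function.Injective rank := fun i j hij =>
    hf <| le_antisymm (not_lt.1 fun h => (rank_lt h).ne' hij) (not_lt.1 fun h => (rank_lt h).ne hij)
  have : Infinite (Set.range rank) := (Set.infinite_range_of_injective rank_injective).to_subtype
  let enum : ℕ ≃o Set.range rank := Nat.Subtype.orderIsoOfNat _
  let e : ℕ ≃ ι := enum.toEquiv.trans (Equiv.ofInjective rank rank_injective).symm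
  have rank_e : ∀ n, rank (e n) = enum n := fun n =>
    Equiv.apply_ofInjective_symm rank_injective (enum n)
  refine ⟨e, fun m n hmn => ?_⟩
  have hrank : rank (e m) < rank (e n) := by
    rw [rank_e, rank_e]
    exact enum.strictMono hmn
  rcases lt_trichotomy (f (e m)) (f (e n)) with h | h | h
  · exact h
  · exact absurd (congrArg rank (hf h)) hrank.ne
  · exact absurd (rank_lt h) hrank.asymm

lemma exists_equiv_monotone_comp {β : Type*} [LinearOrder β] [NoMaxOrder β] {b : ℕ → β}
    (hb : Tendsto b atTop atTop) : ∃ e : ℕ ≃ ℕ, Monotone (b ∘ e) := by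
  let f : ℕ → β ×ₗ ℕ := fun i => toLex (b i, i)
  have f_injective : Function.Injective f := fun i j h => congrArg (fun x => (ofLex x).2) h
  have hfin : ∀ i, {j | f j < f i}.Finite := fun i => by
    have : ∀ᶠ j in cofinite, b i < b j := Nat.cofinite_eq_atTop ▸ hb.eventually_gt_atTop (b i)
    exact this.subset fun j hj => not_lt.2 (Prod.Lex.monotone_fst (f j) (f i) (le_of_lt hj))
  obtain ⟨e, he⟩ := exists_equiv_strictMono_comp f_injective hfin
  exact ⟨e, fun m n hmn => Prod.Lex.monotone_fst _ _ (he.monotone hmn)⟩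

lemma le_comp_of_monotone_comp {β : Type*} [Preorder β] {a b : ℕ → β} (ha : Monotone a)
    (hab : ∀ n, a n ≤ b n) {e : ℕ → ℕ} (he : Function.Injective e) (hbe : Monotone (b ∘ e))
    (n : ℕ) : a n ≤ b (e n) := by
  obtain ⟨j, hjn, hnj⟩ : ∃ j ≤ n, n ≤ e j := by
    by_contra! h
    have hmaps : ∀ j ∈ Finset.range (n + 1), e j ∈ Finset.range n := fun j hj =>
      Finset.mem_range.2 (h j (Finset.mem_range_succ_iff.1 hj))
    simpa using Finset.card_le_card_of_injOn e hmaps he.injOn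
  calc a n ≤ a (e j) := ha hnj
    _ ≤ b (e j) := hab _
    _ ≤ b (e n) := hbe hjn

end Rearrangement

theorem irrational_tsum_inv_of_le {a b : ℕ → ℕ} (ha₀ : ∀ n, 0 < a n) (ha : Monotone a)
    (hab : ∀ n, a n ≤ b n) {p : ℝ} (hp₀ : 0 ≤ p) (hp₁ : p < 1)
    (hs : Summable fun n => (a n : ℝ) ^ (-p)) (hbig : ∀ X : ℝ, ∃ m, X ^ 2 ^ m ≤ a m) :
    Irrational (∑' n, (b n : ℝ)⁻¹) := by
  have hb_atTop : Tendsto b atTop atTop := by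
    refine tendsto_atTop_mono hab (tendsto_atTop_atTop_of_monotone ha fun N => ?_)
    obtain ⟨m, hm⟩ := hbig N
    exact ⟨m, (Nat.le_self_pow (pow_ne_zero m two_ne_zero) N).trans (by exact_mod_cast hm)⟩
  obtain ⟨e, he⟩ := exists_equiv_monotone_comp hb_atTop
  have hae : ∀ n, a n ≤ b (e n) := le_comp_of_monotone_comp ha hab e.injective he
  have hae' : ∀ n, (a n : ℝ) ≤ b (e n) := fun n => by exact_mod_cast hae n
  rw [← e.tsum_eq fun n => (b n : ℝ)⁻¹]
  exact irrational_tsum_inv_of_monotone (fun n => (ha₀ n).trans_le (hae n)) he hp₁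
    (summable_rpow_neg_of_le (fun n => by exact_mod_cast ha₀ n) hae' hp₀ hs)
    fun X => (hbig X).imp fun m hm => hm.trans (hae' m)

lemma exists_pow_two_pow_le_succ_of_limsup_eq_top {a : ℕ → ℕ}
    (h : limsup (fun n : ℕ => (((a n : ℝ) ^ ((2 : ℝ) ^ (-(n : ℝ))) : ℝ) : EReal)) atTop = ⊤)
    (X : ℝ) : ∃ m, X ^ 2 ^ m ≤ a (m + 1) := by
  set Y := max |X| 1
  have hfreq : ∃ᶠ n : ℕ in atTop,
      (Y : EReal) < (((a n : ℝ) ^ ((2 : ℝ) ^ (-(n : ℝ))) : ℝ) : EReal) :=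
    frequently_lt_of_lt_limsup (by isBoundedDefault) (h ▸ EReal.coe_lt_top _)
  obtain ⟨n, hn, hlt⟩ := frequently_atTop.1 hfreq 1
  obtain ⟨m, rfl⟩ := Nat.exists_eq_add_of_le' hn
  have hexp : (2 : ℝ) ^ (-((m + 1 : ℕ) : ℝ)) = ((2 ^ (m + 1) : ℕ) : ℝ)⁻¹ := by
    rw [Real.rpow_neg two_pos.le, Real.rpow_natCast, Nat.cast_pow, Nat.cast_ofNat]
  refine ⟨m, ?_⟩
  calc X ^ 2 ^ m ≤ |X| ^ 2 ^ m := (le_abs_self _).trans (abs_pow X _).le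
    _ ≤ Y ^ 2 ^ m := by gcongr; exact le_max_left _ _
    _ ≤ Y ^ 2 ^ (m + 1) :=
        pow_le_pow_right₀ (le_max_right _ _) (Nat.pow_le_pow_right two_pos m.le_succ)
    _ ≤ ((a (m + 1) : ℝ) ^ ((2 : ℝ) ^ (-((m + 1 : ℕ) : ℝ)))) ^ 2 ^ (m + 1) := by
        gcongr
        exact (EReal.coe_lt_coe_iff.1 hlt).le
    _ = a (m + 1) := by rw [hexp, Real.rpow_inv_natCast_pow (Nat.cast_nonneg _) (by positivity)]

theorem stmt_18_general (ε : ℝ) (hε : 0 < ε) (a b : ℕ → ℕ)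
    (hmono : ∀ n : ℕ, 1 ≤ n → a n ≤ a (n + 1))
    (hgrow : ∀ n : ℕ, 1 ≤ n → (n : ℝ) ^ (1 + ε) ≤ (a n : ℝ))
    (hlimsup : Filter.limsup (fun n : ℕ =>
      (((a n : ℝ) ^ ((2 : ℝ) ^ (-(n : ℝ))) : ℝ) : EReal)) Filter.atTop = ⊤)
    (hab : ∀ n : ℕ, 1 ≤ n → a n ≤ b n) :
    ∃ L : ℝ,
      Tendsto (fun N => ∑ n ∈ Finset.Icc 1 N, 1 / (b n : ℝ)) atTop (nhds L) ∧ Irrational L := by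
  have ha : Monotone fun n => a (n + 1) :=
    monotone_nat_of_le_succ fun n => hmono (n + 1) n.succ_pos
  have hgrow' : ∀ n : ℕ, ((n + 1 : ℕ) : ℝ) ^ (1 + ε) ≤ a (n + 1) := fun n =>
    hgrow (n + 1) n.succ_pos
  have hab' : ∀ n, a (n + 1) ≤ b (n + 1) := fun n => hab (n + 1) n.succ_pos
  have ha₀ : ∀ n, 0 < a (n + 1) := fun n => by
    exact_mod_cast (by positivity : (0 : ℝ) < ((n + 1 : ℕ) : ℝ) ^ (1 + ε)).trans_le (hgrow' n)
  obtain ⟨p, hp, hp₁⟩ : ∃ p, (1 + ε)⁻¹ < p ∧ p < 1 :=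
    exists_between (inv_lt_one_of_one_lt₀ (by linarith))
  have hp₀ : 0 < p := (by positivity : 0 < (1 + ε)⁻¹).trans hp
  have hsa : Summable fun n => (a (n + 1) : ℝ) ^ (-p) :=
    summable_rpow_neg_of_rpow_le hgrow' hp₀.le ((inv_lt_iff_one_lt_mul₀' (by positivity)).1 hp)
  have hsb : Summable fun n => (b (n + 1) : ℝ)⁻¹ :=
    summable_inv_of_summable_rpow_neg
      (fun n => by exact_mod_cast (ha₀ n).trans_le (hab' n)) hp₁.le
      (summable_rpow_neg_of_le (fun n => by exact_mod_cast ha₀ n)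
        (fun n => by exact_mod_cast hab' n) hp₀.le hsa)
  refine ⟨_, hsb.hasSum.tendsto_sum_nat.congr fun N => ?_,
    irrational_tsum_inv_of_le ha₀ ha hab' hp₀.le hp₁ hsa
      (exists_pow_two_pow_le_succ_of_limsup_eq_top hlimsup)⟩
  rw [Finset.range_eq_Ico, Finset.sum_Ico_add' (fun n => (b n : ℝ)⁻¹) 0 N 1, zero_add,
    Finset.Ico_add_one_right_eq_Icc]
  simp only [one_div]

/-- (Erdős, 1975.) If `{a_n}` is an increasing sequence of positive
integers with `a_n ≥ n^(1+ε)` and `limsup a_n^(2^(-n)) = ∞`, then for every sequence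
`{c_n}` of positive integers the sum `Σ 1/(a_n c_n)` is irrational. -/
theorem stmt_18 (ε : ℝ) (hε : 0 < ε) (a : ℕ → ℕ)
    (hpos : ∀ n : ℕ, 1 ≤ n → 0 < a n)
    (hmono : ∀ n : ℕ, 1 ≤ n → a n ≤ a (n + 1))
    (hgrow : ∀ n : ℕ, 1 ≤ n → (n : ℝ) ^ (1 + ε) ≤ (a n : ℝ))
    (hlimsup : Filter.limsup (fun n : ℕ =>
      (((a n : ℝ) ^ ((2 : ℝ) ^ (-(n : ℝ))) : ℝ) : EReal)) Filter.atTop = ⊤) :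
    ∀ c : ℕ → ℕ, (∀ n, 0 < c n) →
      ∃ L : ℝ,
        Tendsto (fun N => ∑ n ∈ Finset.Icc 1 N,
          1 / ((a n : ℝ) * (c n : ℝ))) atTop (nhds L) ∧
        Irrational L := fun c hc => by
  simpa only [Nat.cast_mul] using stmt_18_general ε hε a (fun n => a n * c n) hmono hgrow hlimsup
    fun n _ => Nat.le_mul_of_pos_right _ (hc n)
end

section
/- Let ψ be the unique real root of the polynomial x³ − x² − 1 (the supergolden ratio, ψ ≈ 1.4656). Let {h_n}_{n≥1} be a strictly increasing sequence of positive integers such that h_n ≥ (8/3)^n for infinitely many n. Then the infinite product ∏_{n=1}^∞ (1 + ψ^{−h_n}) converges to a real number that is transcendental over ℚ. -/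
open Filter

/-!
Let `L` be the value of the product and suppose that it is algebraic. Write `α = ψ⁻¹`; the other
conjugates of `α` lie outside the unit disc, so an integer polynomial relation between `α` and `L`
which is nearly satisfied by a partial product cannot have a nonzero error (Liouville). Hence the
exponents `h n` cannot outgrow a fixed multiple of their partial sums, and since these sums exceed
`c ^ n` infinitely often with `c > 2`, there are arbitrarily long windows of indices on which they
grow at least at a rate `r > 2`.

Passing to an ultraproduct along such windows replaces the powers `α ^ h n` in the window by
infinitesimals `α ^ κ i`, where the scale `κ` grows faster than `2 ^ i`. A Thue–Siegel style
dimension count, again closed by Liouville, makes the partial product up to the window algebraic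
over the algebra generated by these powers. So then is the remaining tail, which has the lacunary
expansion `∏ (1 + α ^ κ i)`. An algebraic function satisfies a linear differential equation for the
derivation multiplying each power `α ^ m` by its weight `m`, and the gaps in the exponents of the
tail are too long for that. The constant `2` is sharp: for `h n = 2 ^ n` the tail is the rational
function `1 / (1 - x)`.
-/

section Conjugates

open Polynomial

theorem norm_multiset_prod {K : Type*} [NormedField K] (s : Multiset K) :
    ‖s.prod‖ = (s.map fun z ↦ ‖z‖).prod :=
  map_multiset_prod (normHom : K →*₀ ℝ) s

theorem one_le_prod_norm_aeval_aroots {f p : ℤ[X]} (hf : f.Monic)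
    (hp : ∀ z ∈ f.aroots ℂ, aeval z p ≠ 0) :
    1 ≤ ((f.aroots ℂ).map fun z ↦ ‖aeval z p‖).prod := by
  have hres : ((resultant f p : ℤ) : ℂ) = ((f.aroots ℂ).map fun z ↦ aeval z p).prod := by
    have hdeg : (f.map (algebraMap ℤ ℂ)).natDegree = f.natDegree := hf.natDegree_map _
    have h := resultant_eq_prod_eval (f.map (algebraMap ℤ ℂ)) (p.map (algebraMap ℤ ℂ))
      p.natDegree natDegree_map_le (IsAlgClosed.splits _)
    rw [hdeg, resultant_map_map, (hf.map _).leadingCoeff, one_pow, one_mul] at h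
    simpa only [aroots_def, eval_map_algebraMap, eq_intCast] using h
  have hne : resultant f p ≠ 0 := by
    intro h0
    rw [h0, Int.cast_zero, eq_comm, Multiset.prod_eq_zero_iff, Multiset.mem_map] at hres
    obtain ⟨z, hz, hpz⟩ := hres
    exact hp z hz hpz
  calc (1 : ℝ) ≤ ‖((resultant f p : ℤ) : ℂ)‖ := by
        rw [Complex.norm_intCast]; exact_mod_cast Int.one_le_abs hne
    _ = _ := by
        rw [hres, norm_multiset_prod, Multiset.map_map]; rfl

theorem nodup_aroots_minpoly_of_isIntegral {K : Type*} [Field K] [CharZero K] {x : K}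
    (hx : IsIntegral ℤ x) : ((minpoly ℤ x).aroots ℂ).Nodup := by
  have hirr : Irreducible ((minpoly ℤ x).map (algebraMap ℤ ℚ)) := by
    rw [← minpoly.isIntegrallyClosed_eq_field_fractions' ℚ hx]
    exact minpoly.irreducible hx.tower_top
  rw [← aroots_map ℂ ℚ (minpoly ℤ x)]
  exact (nodup_aroots_iff_of_splits hirr.ne_zero (IsAlgClosed.splits _)).2 hirr.separable

theorem aeval_ne_zero_of_mem_aroots_minpoly {K : Type*} [Field K] [CharZero K] {x : K}
    (hx : IsIntegral ℤ x) {p : ℤ[X]} (hp : aeval x p ≠ 0) {z : ℂ}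
    (hz : z ∈ (minpoly ℤ x).aroots ℂ) : aeval z p ≠ 0 := by
  intro hzp
  have hzx : aeval z (minpoly ℤ x) = 0 := (mem_aroots.1 hz).2
  have hzint : IsIntegral ℤ z := ⟨minpoly ℤ x, minpoly.monic hx, hzx⟩
  have hdvd : minpoly ℤ x ∣ minpoly ℤ z :=
    (minpoly.prime_of_isIntegrallyClosed hzint).irreducible.dvd_symm
      (minpoly.prime_of_isIntegrallyClosed hx).irreducible
      (minpoly.isIntegrallyClosed_dvd hzint hzx)
  obtain ⟨q, rfl⟩ := hdvd.trans (minpoly.isIntegrallyClosed_dvd hzint hzp)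
  exact hp (by rw [map_mul, minpoly.aeval, zero_mul])

/-- An algebraic integer `ψ > 1` which is a unit and all of whose other conjugates lie in the open
unit disc. -/
structure IsPisotUnit (ψ : ℝ) : Prop where
  one_lt : 1 < ψ
  isIntegral : IsIntegral ℤ ψ
  isUnit_coeff_zero : IsUnit ((minpoly ℤ ψ).coeff 0)
  norm_lt_one : ∀ z ∈ (minpoly ℤ ψ).aroots ℂ, z ≠ ψ → ‖z‖ < 1

/-- The properties of `α = ψ⁻¹` and of the family `B` of its other conjugates, for a Pisot unit
`ψ`, on which the Diophantine estimates rest; `one_le` is the product formula. -/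
structure IsExpandingConjugates (α : ℝ) (B : Multiset ℂ) : Prop where
  pos : 0 < α
  lt_one : α < 1
  one_lt_norm : ∀ β ∈ B, 1 < ‖β‖
  mul_prod_norm : α * (B.map fun β ↦ ‖β‖).prod = 1
  one_le : ∀ p : ℤ[X], aeval α p ≠ 0 → 1 ≤ |aeval α p| * (B.map fun β ↦ ‖aeval β p‖).prod

theorem aeval_reverse_eq_pow_mul {K : Type*} [Field K] {z : K} (hz : z ≠ 0) (p : ℤ[X]) :
    aeval z p.reverse = z ^ p.natDegree * aeval z⁻¹ p := by
  let := invertibleOfNonzero (inv_ne_zero hz)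
  have h := eval₂_reverse_mul_pow (algebraMap ℤ K) z⁻¹ p
  rw [invOf_eq_inv, inv_inv] at h
  rw [aeval_def, aeval_def, ← h, inv_pow, mul_comm, mul_assoc,
    inv_mul_cancel₀ (pow_ne_zero _ hz), mul_one]

namespace IsPisotUnit

variable {ψ : ℝ}

theorem coe_mem_aroots (hψ : IsPisotUnit ψ) : (ψ : ℂ) ∈ (minpoly ℤ ψ).aroots ℂ := by
  refine mem_aroots.2 ⟨(minpoly.monic hψ.isIntegral).ne_zero, ?_⟩
  rw [← Complex.coe_algebraMap, aeval_algebraMap_apply, minpoly.aeval, map_zero]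

theorem prod_norm_aroots (hψ : IsPisotUnit ψ) :
    (((minpoly ℤ ψ).aroots ℂ).map fun z ↦ ‖z‖).prod = 1 := by
  have h := Splits.coeff_zero_eq_prod_roots_of_monic
    (IsAlgClosed.splits ((minpoly ℤ ψ).map (algebraMap ℤ ℂ)))
    ((minpoly.monic hψ.isIntegral).map _)
  apply_fun norm at h
  rw [coeff_map, norm_mul, norm_pow, norm_neg, norm_one, one_pow, one_mul,
    norm_multiset_prod] at h
  rw [aroots_def]
  refine h.symm.trans ?_
  rcases Int.isUnit_iff.1 hψ.isUnit_coeff_zero with h | h <;> simp [h]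

theorem ne_zero_of_mem_aroots (hψ : IsPisotUnit ψ) {z : ℂ} (hz : z ∈ (minpoly ℤ ψ).aroots ℂ) :
    z ≠ 0 := by
  rintro rfl
  refine absurd hψ.prod_norm_aroots (ne_of_eq_of_ne ?_ zero_ne_one)
  exact Multiset.prod_eq_zero (Multiset.mem_map.2 ⟨0, hz, norm_zero⟩)

theorem prod_map_aroots (hψ : IsPisotUnit ψ) (F : ℂ → ℝ) :
    F ψ * ((((minpoly ℤ ψ).aroots ℂ).erase ψ).map F).prod =
      (((minpoly ℤ ψ).aroots ℂ).map F).prod := by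
  rw [← Multiset.prod_cons, ← Multiset.map_cons, Multiset.cons_erase hψ.coe_mem_aroots]

theorem one_lt_norm_inv (hψ : IsPisotUnit ψ) {z : ℂ}
    (hz : z ∈ ((minpoly ℤ ψ).aroots ℂ).erase ψ) : 1 < ‖z⁻¹‖ := by
  obtain ⟨hzψ, hz⟩ := (nodup_aroots_minpoly_of_isIntegral hψ.isIntegral).mem_erase_iff.1 hz
  rw [norm_inv]
  exact (one_lt_inv₀ (norm_pos_iff.2 (hψ.ne_zero_of_mem_aroots hz))).2 (hψ.norm_lt_one z hz hzψ)

theorem isExpandingConjugates_inv (hψ : IsPisotUnit ψ) :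
    IsExpandingConjugates ψ⁻¹ ((((minpoly ℤ ψ).aroots ℂ).erase ψ).map (·⁻¹)) where
  pos := inv_pos.2 (zero_lt_one.trans hψ.one_lt)
  lt_one := inv_lt_one_of_one_lt₀ hψ.one_lt
  one_lt_norm β hβ := by
    obtain ⟨z, hz, rfl⟩ := Multiset.mem_map.1 hβ
    exact hψ.one_lt_norm_inv hz
  mul_prod_norm := by
    have h := hψ.prod_map_aroots fun z ↦ ‖z⁻¹‖
    simp only [norm_inv, Complex.norm_real, Real.norm_of_nonneg (zero_lt_one.trans hψ.one_lt).le,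
      Multiset.prod_map_inv, hψ.prod_norm_aroots, inv_one] at h
    simpa only [Multiset.map_map, Function.comp_apply, norm_inv, Multiset.prod_map_inv] using h
  one_le p hp := by
    have hψ0 : ψ ≠ 0 := (zero_lt_one.trans hψ.one_lt).ne'
    have hp' : aeval ψ p.reverse ≠ 0 := by
      rw [aeval_reverse_eq_pow_mul hψ0]
      exact mul_ne_zero (pow_ne_zero _ hψ0) hp
    calc (1 : ℝ)
        ≤ (((minpoly ℤ ψ).aroots ℂ).map fun z ↦ ‖aeval z p.reverse‖).prod :=
          one_le_prod_norm_aeval_aroots (minpoly.monic hψ.isIntegral) fun z hz ↦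
            aeval_ne_zero_of_mem_aroots_minpoly hψ.isIntegral hp' hz
      _ = (((minpoly ℤ ψ).aroots ℂ).map fun z ↦ ‖z‖ ^ p.natDegree * ‖aeval z⁻¹ p‖).prod := by
          refine congrArg _ (Multiset.map_congr rfl fun z hz ↦ ?_)
          rw [aeval_reverse_eq_pow_mul (hψ.ne_zero_of_mem_aroots hz), norm_mul, norm_pow]
      _ = (((minpoly ℤ ψ).aroots ℂ).map fun z ↦ ‖aeval z⁻¹ p‖).prod := by
          rw [Multiset.prod_map_mul, Multiset.prod_map_pow, hψ.prod_norm_aroots, one_pow, one_mul]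
      _ = |aeval ψ⁻¹ p| *
            (((((minpoly ℤ ψ).aroots ℂ).erase ψ).map (·⁻¹)).map fun β ↦ ‖aeval β p‖).prod := by
          rw [← hψ.prod_map_aroots, Multiset.map_map, ← Complex.ofReal_inv,
            ← Complex.coe_algebraMap, aeval_algebraMap_apply, Complex.coe_algebraMap,
            Complex.norm_real, Real.norm_eq_abs]
          rfl

end IsPisotUnit

theorem IsExpandingConjugates.pow_le_of_aeval_ne_zero {α : ℝ} {B : Multiset ℂ}
    (hαB : IsExpandingConjugates α B) {p : ℤ[X]} {a b : ℝ} {m w : ℕ}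
    (hα : |aeval α p| ≤ a * α ^ m) (hB : ∀ β ∈ B, ‖aeval β p‖ ≤ b * ‖β‖ ^ w)
    (hp : aeval α p ≠ 0) : α ^ w ≤ a * b ^ B.card * α ^ m := by
  have hprod : (B.map fun β ↦ ‖aeval β p‖).prod ≤ b ^ B.card * (B.map fun β ↦ ‖β‖).prod ^ w := by
    calc (B.map fun β ↦ ‖aeval β p‖).prod ≤ (B.map fun β ↦ b * ‖β‖ ^ w).prod :=
          Multiset.prod_map_le_prod_map₀ _ _ (fun β _ ↦ norm_nonneg _) hB
      _ = _ := by
          rw [Multiset.prod_map_mul, Multiset.map_const', Multiset.prod_replicate,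
            Multiset.prod_map_pow]
  have hle := (hαB.one_le p hp).trans (mul_le_mul hα hprod
    (Multiset.prod_nonneg (by simp)) ((abs_nonneg _).trans hα))
  calc α ^ w = α ^ w * 1 := (mul_one _).symm
    _ ≤ α ^ w * (a * α ^ m * (b ^ B.card * (B.map fun β ↦ ‖β‖).prod ^ w)) :=
        mul_le_mul_of_nonneg_left hle (pow_nonneg hαB.pos.le w)
    _ = a * b ^ B.card * α ^ m * (α * (B.map fun β ↦ ‖β‖).prod) ^ w := by ring
    _ = a * b ^ B.card * α ^ m := by rw [hαB.mul_prod_norm, one_pow, mul_one]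

theorem norm_lt_one_of_supergolden {ψ : ℝ} (hψ1 : 1 < ψ) (hψ : ψ ^ 3 - ψ ^ 2 - 1 = 0) {z : ℂ}
    (hz : z ^ 3 - z ^ 2 - 1 = 0) (hzψ : z ≠ ψ) : ‖z‖ < 1 := by
  have hψz : (ψ : ℂ) ^ 3 - ψ ^ 2 - 1 = 0 := mod_cast hψ
  have hquad : z ^ 2 + (ψ - 1) * z + ψ * (ψ - 1) = 0 :=
    mul_left_cancel₀ (sub_ne_zero.2 hzψ) (by linear_combination hz - hψz)
  have hre : z.re ^ 2 - z.im ^ 2 + (ψ - 1) * z.re + ψ * (ψ - 1) = 0 := by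
    simpa [pow_two] using congrArg Complex.re hquad
  have him : z.im * (2 * z.re + (ψ - 1)) = 0 := by
    have h := congrArg Complex.im hquad
    simp only [pow_two, Complex.add_im, Complex.mul_im, Complex.sub_re, Complex.sub_im,
      Complex.ofReal_re, Complex.ofReal_im, Complex.one_re, Complex.one_im, Complex.zero_im] at h
    linear_combination h
  have him0 : z.im ≠ 0 := by
    intro h0
    rw [h0] at hre
    nlinarith [sq_nonneg (2 * z.re + (ψ - 1)), mul_pos (sub_pos.2 hψ1) (sub_pos.2 hψ1)]
  have hsum : 2 * z.re + (ψ - 1) = 0 := (mul_eq_zero.1 him).resolve_left him0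
  have hnormSq : ‖z‖ ^ 2 = ψ * (ψ - 1) := by
    rw [Complex.sq_norm, Complex.normSq_apply]
    linear_combination z.re * hsum - hre
  refine lt_of_pow_lt_pow_left₀ 2 zero_le_one ?_
  rw [hnormSq, one_pow]
  nlinarith [mul_pos (sub_pos.2 hψ1) (sub_pos.2 hψ1)]

theorem isPisotUnit_of_supergolden {ψ : ℝ} (hψ : ψ ^ 3 - ψ ^ 2 - 1 = 0) : IsPisotUnit ψ := by
  have hψ1 : 1 < ψ := by nlinarith [sq_nonneg ψ]
  have hroot : aeval ψ (X ^ 3 - X ^ 2 - 1 : ℤ[X]) = 0 := by simpa using hψ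
  have hint : IsIntegral ℤ ψ := ⟨X ^ 3 - X ^ 2 - 1, by monicity!, hroot⟩
  obtain ⟨q, hq⟩ := minpoly.isIntegrallyClosed_dvd hint hroot
  refine ⟨hψ1, hint, ?_, fun z hz hzψ ↦ norm_lt_one_of_supergolden hψ1 hψ ?_ hzψ⟩
  · have h := congrArg (coeff · 0) hq
    simp only [mul_coeff_zero, coeff_sub, coeff_X_pow, coeff_one] at h
    exact .of_mul_eq_one (-q.coeff 0) (by norm_num at h; linarith)
  · have h := congrArg (aeval z) hq
    rw [map_mul, (mem_aroots.1 hz).2, zero_mul] at h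
    simpa using h

end Conjugates

section SparseProduct

open Polynomial Asymptotics Topology

/-- The `N`-th partial product of `∏ (1 + x ^ k i)`, over any commutative semiring, so that the same
product may be taken at a real number, at its conjugates and at the polynomial variable. -/
def sparseProd {R : Type*} [CommSemiring R] (k : ℕ → ℕ) (x : R) (N : ℕ) : R :=
  ∏ i ∈ Finset.range N, (1 + x ^ k i)

theorem sparseProd_succ {R : Type*} [CommSemiring R] (k : ℕ → ℕ) (x : R) (N : ℕ) :
    sparseProd k x (N + 1) = sparseProd k x N * (1 + x ^ k N) :=
  Finset.prod_range_succ _ _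

theorem aeval_sparseProd_X {R A : Type*} [CommSemiring R] [CommSemiring A] [Algebra R A]
    (k : ℕ → ℕ) (x : A) (N : ℕ) : aeval x (sparseProd k (X : R[X]) N) = sparseProd k x N := by
  simp only [sparseProd, map_prod, map_add, map_one, map_pow, aeval_X]

variable {α : ℝ} {k : ℕ → ℕ}

theorem one_le_sparseProd (h0 : 0 < α) (N : ℕ) : 1 ≤ sparseProd k α N :=
  Finset.prod_const_one.ge.trans <| Finset.prod_le_prod (fun _ _ ↦ zero_le_one) fun _ _ ↦
    le_add_of_nonneg_right (pow_nonneg h0.le _)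

theorem sparseProd_strictMono (h0 : 0 < α) : StrictMono (sparseProd k α) :=
  strictMono_nat_of_lt_succ fun N ↦ by
    rw [sparseProd_succ]
    exact lt_mul_of_one_lt_right (zero_lt_one.trans_le (one_le_sparseProd h0 N))
      (lt_add_of_pos_right 1 (pow_pos h0 _))

theorem sparseProd_le_exp (h0 : 0 < α) (h1 : α < 1) (hk : StrictMono k) (N : ℕ) :
    sparseProd k α N ≤ Real.exp (1 - α)⁻¹ := by
  refine (Real.prod_one_add_le_exp_sum _ fun i ↦ pow_nonneg h0.le _).trans (Real.exp_le_exp.2 ?_)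
  calc ∑ i ∈ Finset.range N, α ^ k i ≤ ∑ i ∈ Finset.range N, α ^ i :=
        Finset.sum_le_sum fun i _ ↦ pow_le_pow_of_le_one h0.le h1.le hk.le_apply
    _ ≤ ∑' i, α ^ i :=
        (summable_geometric_of_lt_one h0.le h1).sum_le_tsum _ fun i _ ↦ pow_nonneg h0.le i
    _ = (1 - α)⁻¹ := tsum_geometric_of_lt_one h0.le h1

theorem dist_sparseProd_succ_le (h0 : 0 < α) (h1 : α < 1) (hk : StrictMono k) (N m : ℕ) :
    dist (sparseProd k α (N + m)) (sparseProd k α (N + (m + 1))) ≤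
      Real.exp (1 - α)⁻¹ * α ^ k N * α ^ m := by
  have hkm : k N + m ≤ k (N + m) := by
    induction m with
    | zero => rfl
    | succ m ih => exact Nat.succ_le_of_lt (ih.trans_lt (hk (Nat.lt_succ_self (N + m))))
  rw [← add_assoc, dist_comm, Real.dist_eq, sparseProd_succ, mul_one_add, add_sub_cancel_left,
    abs_of_nonneg (mul_nonneg (zero_le_one.trans (one_le_sparseProd h0 _)) (pow_nonneg h0.le _)),
    mul_assoc, ← pow_add]
  exact mul_le_mul (sparseProd_le_exp h0 h1 hk _) (pow_le_pow_of_le_one h0.le h1.le hkm)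
    (pow_nonneg h0.le _) (Real.exp_pos _).le

theorem exists_tendsto_sparseProd (h0 : 0 < α) (h1 : α < 1) (hk : StrictMono k) :
    ∃ L C : ℝ, Tendsto (sparseProd k α) atTop (𝓝 L) ∧
      ∀ N, |L - sparseProd k α N| ≤ C * α ^ k N := by
  have hdist := dist_sparseProd_succ_le h0 h1 hk
  obtain ⟨L, hL⟩ := cauchySeq_tendsto_of_complete
    (cauchySeq_of_le_geometric (f := sparseProd k α) α _ h1 (by simpa using hdist 0))
  refine ⟨L, Real.exp (1 - α)⁻¹ / (1 - α), hL, fun N ↦ ?_⟩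
  have hLN : Tendsto (fun m ↦ sparseProd k α (N + m)) atTop (𝓝 L) :=
    hL.comp (tendsto_add_atTop_nat N |>.congr fun m ↦ add_comm m N)
  rw [← Real.dist_eq, dist_comm, div_mul_eq_mul_div]
  exact dist_le_of_le_geometric_of_tendsto₀ α _ h1 (hdist N) hLN

theorem norm_sparseProd_le {β : ℂ} (hβ : 1 < ‖β‖) (hk : StrictMono k) (N : ℕ) :
    ‖sparseProd k β N‖ ≤ Real.exp (1 - ‖β‖⁻¹)⁻¹ * ‖β‖ ^ (∑ i ∈ Finset.range N, k i) := by
  have hβ0 : 0 < ‖β‖ := zero_lt_one.trans hβ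
  calc ‖sparseProd k β N‖
      ≤ ∏ i ∈ Finset.range N, ((1 + ‖β‖⁻¹ ^ k i) * ‖β‖ ^ k i) := by
        rw [sparseProd, norm_prod]
        refine Finset.prod_le_prod (fun i _ ↦ norm_nonneg _) fun i _ ↦ ?_
        rw [add_mul, one_mul, inv_pow, inv_mul_cancel₀ (pow_pos hβ0 _).ne', add_comm (‖β‖ ^ k i)]
        simpa only [norm_one, norm_pow] using norm_add_le 1 (β ^ k i)
    _ = sparseProd k ‖β‖⁻¹ N * ‖β‖ ^ (∑ i ∈ Finset.range N, k i) := by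
        rw [sparseProd, Finset.prod_mul_distrib, Finset.prod_pow_eq_pow_sum]
    _ ≤ _ := mul_le_mul_of_nonneg_right
        (sparseProd_le_exp (inv_pos.2 hβ0) (inv_lt_one_of_one_lt₀ hβ) hk N)
        (pow_nonneg hβ0.le _)

theorem exists_forall_norm_sparseProd_le {B : Multiset ℂ} (hB : ∀ β ∈ B, 1 < ‖β‖)
    (hk : StrictMono k) : ∃ C : ℝ, 1 ≤ C ∧ ∀ β ∈ B, ∀ N,
      ‖sparseProd k β N‖ ≤ C * ‖β‖ ^ (∑ i ∈ Finset.range N, k i) := by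
  have h : ∀ᶠ C : ℝ in atTop, ∀ β ∈ B.toFinset, Real.exp (1 - ‖β‖⁻¹)⁻¹ ≤ C :=
    (Filter.eventually_all_finset _).2 fun β _ ↦ eventually_ge_atTop _
  obtain ⟨C, hC1, hC⟩ := ((eventually_ge_atTop 1).and h).exists
  exact ⟨C, hC1, fun β hβ N ↦ (norm_sparseProd_le (hB β hβ) hk N).trans
    (mul_le_mul_of_nonneg_right (hC β (Multiset.mem_toFinset.2 hβ)) (pow_nonneg (norm_nonneg _) _))⟩

theorem exists_forall_norm_aeval_le (q : ℤ[X]) : ∃ C : ℝ, 0 ≤ C ∧ ∀ (z : ℂ) (R : ℝ), 1 ≤ R →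
    ‖z‖ ≤ R → ‖aeval z q‖ ≤ C * R ^ q.natDegree := by
  refine ⟨∑ i ∈ Finset.range (q.natDegree + 1), ‖(q.coeff i : ℂ)‖, by positivity,
    fun z R hR hz ↦ ?_⟩
  rw [aeval_eq_sum_range, Finset.sum_mul]
  refine norm_sum_le_of_le _ fun i hi ↦ ?_
  rw [zsmul_eq_mul, norm_mul, norm_pow]
  gcongr
  calc ‖z‖ ^ i ≤ R ^ i := by gcongr
    _ ≤ R ^ q.natDegree := pow_le_pow_right₀ hR (Finset.mem_range_succ_iff.1 hi)

theorem exists_forall_le_add_of_pow_le (h0 : 0 < α) (h1 : α < 1) (K : ℝ) :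
    ∃ M : ℕ, ∀ m w : ℕ, α ^ w ≤ K * α ^ m → m ≤ w + M := by
  have hK : 0 < max K 1 := lt_max_of_lt_right one_pos
  obtain ⟨M, hM⟩ := exists_pow_lt_of_lt_one (inv_pos.2 hK) h1
  refine ⟨M, fun m w hle ↦ not_lt.1 fun hlt ↦ hle.not_gt ?_⟩
  calc K * α ^ m ≤ max K 1 * α ^ (w + M) := by
        gcongr ?_ * ?_
        exacts [le_max_left _ _, pow_le_pow_of_le_one h0.le h1.le hlt.le]
    _ = α ^ w * (max K 1 * α ^ M) := by ring
    _ < α ^ w := mul_lt_of_lt_one_right (pow_pos h0 w) ((lt_inv_mul_iff₀ hK).1 (by simpa using hM))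

theorem eventually_aeval_ne_zero_of_injective {P : ℕ → ℝ} (hP : Function.Injective P) {q : ℤ[X]}
    (hq : q ≠ 0) : ∀ᶠ N in atTop, aeval (P N) q ≠ 0 := by
  rw [← Nat.cofinite_eq_atTop]
  filter_upwards [hP.tendsto_cofinite.eventually (q.rootSet_finite ℝ).compl_mem_cofinite]
    with N hN h0
  exact hN (mem_rootSet.2 ⟨hq, h0⟩)

theorem aeval_aeval_sparseProd_X {A : Type*} [CommRing A] (q : ℤ[X]) (x : A) (N : ℕ) :
    aeval x (aeval (sparseProd k (X : ℤ[X]) N) q) = aeval (sparseProd k x N) q := by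
  rw [← aeval_algHom_apply, aeval_sparseProd_X]

/- Liouville's argument: `L` is approximated within `α ^ k N` by a polynomial in `α` whose
conjugates have size `‖β‖ ^ (k 0 + ⋯ + k (N - 1))`. -/
theorem exists_eventually_le_mul_sum_add_of_isAlgebraic {B : Multiset ℂ}
    (hαB : IsExpandingConjugates α B) (hk : StrictMono k) {L C₀ : ℝ}
    (hlim : Tendsto (sparseProd k α) atTop (𝓝 L))
    (hC₀ : ∀ N, |L - sparseProd k α N| ≤ C₀ * α ^ k N) (hL : IsAlgebraic ℚ L) :
    ∃ d M : ℕ, ∀ᶠ N in atTop, k N ≤ d * ∑ i ∈ Finset.range N, k i + M := by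
  obtain ⟨q, hq0, hqL⟩ := (IsFractionRing.isAlgebraic_iff ℤ ℚ ℝ).2 hL
  obtain ⟨C₁, hC₁1, hC₁⟩ := exists_forall_norm_sparseProd_le hαB.one_lt_norm hk
  obtain ⟨C₂, -, hC₂⟩ := exists_forall_norm_aeval_le q
  have happrox : (fun N ↦ aeval (sparseProd k α N) q) =O[atTop] fun N ↦ α ^ k N := by
    have hLip := (q.hasDerivAt_aeval L).isBigO_sub.comp_tendsto hlim
    simp only [hqL, sub_zero, Function.comp_def] at hLip
    refine hLip.trans (.of_bound C₀ (.of_forall fun N ↦ ?_))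
    rw [Real.norm_eq_abs, abs_sub_comm, Real.norm_of_nonneg (pow_nonneg hαB.pos.le _)]
    exact hC₀ N
  obtain ⟨a, ha⟩ := happrox.bound
  obtain ⟨M, hM⟩ := exists_forall_le_add_of_pow_le hαB.pos hαB.lt_one
    (a * (C₂ * C₁ ^ q.natDegree) ^ B.card)
  refine ⟨q.natDegree, M, ?_⟩
  filter_upwards [ha, eventually_aeval_ne_zero_of_injective
    (sparseProd_strictMono (k := k) hαB.pos).injective hq0] with N hN hne
  refine hM _ _ (hαB.pow_le_of_aeval_ne_zero (p := aeval (sparseProd k X N) q) ?_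
    (fun β hβ ↦ ?_) (by rwa [aeval_aeval_sparseProd_X]))
  · rwa [aeval_aeval_sparseProd_X, ← Real.norm_eq_abs, ← Real.norm_of_nonneg
      (pow_nonneg hαB.pos.le (k N))]
  · rw [aeval_aeval_sparseProd_X, mul_assoc, mul_comm q.natDegree, pow_mul, ← mul_pow]
    exact hC₂ _ _ (one_le_mul_of_one_le_of_one_le hC₁1 (one_le_pow₀ (hαB.one_lt_norm β hβ).le))
      (hC₁ β hβ N)

theorem isBigO_sum_succ_of_eventually_le (hk : StrictMono k) {d M : ℕ}
    (h : ∀ᶠ N in atTop, k N ≤ d * ∑ i ∈ Finset.range N, k i + M) :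
    (fun N ↦ ((∑ i ∈ Finset.range (N + 1), k i : ℕ) : ℝ)) =O[atTop]
      fun N ↦ ((∑ i ∈ Finset.range N, k i : ℕ) : ℝ) := by
  refine .of_bound (1 + d + M : ℕ) ?_
  filter_upwards [h, eventually_ge_atTop 2] with N hN hN2
  have hsum : 1 ≤ ∑ i ∈ Finset.range N, k i :=
    (Nat.one_le_of_lt (hk zero_lt_one)).trans
      (Finset.single_le_sum_of_canonicallyOrdered (Finset.mem_range.2 hN2))
  rw [Finset.sum_range_succ, Real.norm_natCast, Real.norm_natCast]
  norm_cast
  nlinarith [Nat.mul_le_mul_left M hsum]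

theorem frequently_forall_le_add {y : ℕ → ℝ} (hy : ∀ n, 0 ≤ y n)
    (hratio : (fun n ↦ y (n + 1)) =O[atTop] y) (hunbdd : ∀ M, ∃ᶠ n in atTop, M < y n) (t : ℕ) :
    ∃ᶠ n in atTop, ∀ J ≤ t, y n ≤ y (n + J) := by
  intro hcon
  obtain ⟨C, hC1, hC⟩ : ∃ C ≥ (1 : ℝ), IsBigOWith C atTop (fun n ↦ y (n + 1)) y :=
    let ⟨C, hC⟩ := hratio.isBigOWith
    ⟨max C 1, le_max_right C 1, hC.weaken (le_max_left C 1)⟩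
  obtain ⟨n₀, hn₀⟩ := eventually_atTop.1 (hcon.and hC.bound)
  have hdrop : ∀ n ≥ n₀, ∃ J ≤ t, y (n + J) ≤ y n₀ := by
    intro n hn
    induction n, hn using Nat.le_induction with
    | base => exact ⟨0, t.zero_le, le_rfl⟩
    | succ n hn ih =>
      obtain ⟨J, hJt, hJ⟩ := ih
      obtain _ | J := J
      · have hlow := (hn₀ n hn).1
        push Not at hlow
        obtain ⟨J, hJt, hlt⟩ := hlow
        obtain _ | J := J
        · exact absurd hlt (lt_irrefl _)
        · exact ⟨J, by omega, by rw [add_right_comm]; exact hlt.le.trans hJ⟩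
      · exact ⟨J, by omega, by rwa [add_right_comm]⟩
  have hgrowth : ∀ n ≥ n₀, ∀ i, y (n + i) ≤ C ^ i * y n := fun n hn i ↦
    le_geom (u := fun i ↦ y (n + i)) (zero_le_one.trans hC1) i fun j _ ↦ by
      simpa only [Real.norm_of_nonneg (hy _), add_assoc] using (hn₀ (n + j) (by omega)).2
  obtain ⟨n, hn, hnt⟩ := ((hunbdd (C ^ t * y n₀)).and_eventually
    (eventually_ge_atTop (n₀ + t))).exists
  obtain ⟨J, hJt, hJ⟩ := hdrop (n - t) (by omega)
  refine hn.not_ge ?_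
  calc y n = y (n - t + J + (t - J)) := by congr 1; omega
    _ ≤ C ^ (t - J) * y (n - t + J) := hgrowth _ (by omega) _
    _ ≤ C ^ t * y n₀ := by
        gcongr
        exacts [hy _, by omega]

theorem frequently_forall_pow_mul_le {H : ℕ → ℝ} {r c : ℝ} (hr : 0 < r) (hrc : r < c)
    (hH : ∀ n, 0 ≤ H n) (hratio : (fun n ↦ H (n + 1)) =O[atTop] H)
    (hgrow : ∃ᶠ n in atTop, c ^ n ≤ H n) (t : ℕ) :
    ∃ᶠ n in atTop, ∀ J ≤ t, r ^ J * H n ≤ H (n + J) := by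
  have hratio' : (fun n ↦ H (n + 1) / r ^ (n + 1)) =O[atTop] fun n ↦ H n / r ^ n := by
    simp only [div_eq_mul_inv]
    refine hratio.mul (.of_bound r⁻¹ (.of_forall fun n ↦ ?_))
    rw [pow_succ, mul_inv_rev, norm_mul, Real.norm_of_nonneg (inv_nonneg.2 hr.le)]
  have hunbdd : ∀ M, ∃ᶠ n in atTop, M < H n / r ^ n := fun M ↦ by
    have hlarge := (tendsto_pow_atTop_atTop_of_one_lt ((one_lt_div hr).2 hrc)).eventually_gt_atTop M
    refine (hgrow.and_eventually hlarge).mono fun n ⟨hn, hM⟩ ↦ hM.trans_le ?_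
    rw [div_pow]
    gcongr
  refine (frequently_forall_le_add (fun n ↦ div_nonneg (hH n) (pow_pos hr n).le) hratio' hunbdd
    t).mono fun n hn J hJ ↦ ?_
  have h := hn J hJ
  rw [div_le_div_iff₀ (pow_pos hr _) (pow_pos hr _), pow_add] at h
  nlinarith [pow_pos hr n]

end SparseProduct

section HyperPow

open Asymptotics Hyperreal ArchimedeanClass

variable {α : ℝ}

theorem ofSeq_eq_ofSeq {f g : ℕ → ℝ} : ofSeq f = ofSeq g ↔ f =ᶠ[hyperfilter ℕ] g :=
  Germ.coe_eq

theorem abs_ofSeq (f : ℕ → ℝ) : |ofSeq f| = ofSeq fun t ↦ |f t| := by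
  rcases le_total 0 (ofSeq f) with h | h
  · rw [abs_of_nonneg h]
    exact ofSeq_eq_ofSeq.2 <| (ofSeq_le_ofSeq.1 h).mono fun t ht ↦ (abs_of_nonneg ht).symm
  · rw [abs_of_nonpos h]
    exact ofSeq_eq_ofSeq.2 <| (ofSeq_le_ofSeq.1 h).mono fun t ht ↦ (abs_of_nonpos ht).symm

theorem ofSeq_prod {ι : Type*} (s : Finset ι) (f : ι → ℕ → ℝ) :
    ofSeq (fun t ↦ ∏ i ∈ s, f i t) = ∏ i ∈ s, ofSeq (f i) := by
  rw [← Finset.prod_fn]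
  exact map_prod (Germ.coeRingHom (hyperfilter ℕ : Filter ℕ)) f s

theorem ofSeq_sum {ι : Type*} (s : Finset ι) (f : ι → ℕ → ℝ) :
    ofSeq (fun t ↦ ∑ i ∈ s, f i t) = ∑ i ∈ s, ofSeq (f i) := by
  rw [← Finset.sum_fn]
  exact map_sum (Germ.coeRingHom (hyperfilter ℕ : Filter ℕ)) f s

theorem mk_ofSeq_le_mk_ofSeq {f g : ℕ → ℝ} :
    mk (ofSeq g) ≤ mk (ofSeq f) ↔ f =O[hyperfilter ℕ] g := by
  have hmk (n : ℕ) : |ofSeq f| ≤ n • |ofSeq g| ↔ ∀ᶠ t in hyperfilter ℕ, ‖f t‖ ≤ n * ‖g t‖ := by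
    rw [abs_ofSeq, abs_ofSeq, nsmul_eq_mul]
    exact ofSeq_le_ofSeq
  simp only [mk_le_mk, hmk]
  constructor
  · rintro ⟨n, hn⟩
    exact .of_bound n hn
  · intro h
    obtain ⟨C, hC⟩ := h.bound
    refine ⟨⌈C⌉₊, hC.mono fun t ht ↦ ht.trans ?_⟩
    gcongr
    exact Nat.le_ceil C

/-- The nonstandard extension of `r ↦ α ^ r`. -/
noncomputable def hyperPow (α : ℝ) (x : ℝ*) : ℝ* := Germ.map (α ^ ·) x

theorem hyperPow_ofSeq (f : ℕ → ℝ) : hyperPow α (ofSeq f) = ofSeq fun t ↦ α ^ f t := rfl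

theorem hyperPow_coe (r : ℝ) : hyperPow α r = (α ^ r : ℝ) := rfl

theorem hyperPow_zero : hyperPow α 0 = 1 := by
  simpa using hyperPow_coe (α := α) 0

theorem hyperPow_add (h0 : 0 < α) (x y : ℝ*) :
    hyperPow α (x + y) = hyperPow α x * hyperPow α y := by
  obtain ⟨f, rfl⟩ := ofSeq_surjective x
  obtain ⟨g, rfl⟩ := ofSeq_surjective y
  change ofSeq (fun t ↦ α ^ (f t + g t)) = ofSeq (fun t ↦ α ^ f t * α ^ g t)
  simp only [Real.rpow_add h0]

theorem hyperPow_pos (h0 : 0 < α) (x : ℝ*) : 0 < hyperPow α x := by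
  obtain ⟨f, rfl⟩ := ofSeq_surjective x
  exact ofSeq_lt_ofSeq.2 (.of_forall fun t ↦ Real.rpow_pos_of_pos h0 _)

theorem mk_hyperPow_pos (h0 : 0 < α) (h1 : α < 1) {x : ℝ*} (hx : x.Tendsto atTop) :
    0 < mk (hyperPow α x) := by
  obtain ⟨f, rfl⟩ := ofSeq_surjective x
  exact archimedeanClassMk_pos_of_tendsto <| tendsto_ofSeq.2 <|
    (tendsto_rpow_atTop_of_base_lt_one α (by linarith) h1).comp (tendsto_ofSeq.1 hx)

theorem mk_hyperPow_le_mk_hyperPow (h0 : 0 < α) (h1 : α < 1) {x y : ℝ*} (hxy : x ≤ y) :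
    mk (hyperPow α x) ≤ mk (hyperPow α y) := by
  refine mk_antitoneOn (hyperPow_pos h0 y).le (hyperPow_pos h0 x).le ?_
  obtain ⟨f, rfl⟩ := ofSeq_surjective x
  obtain ⟨g, rfl⟩ := ofSeq_surjective y
  exact ofSeq_le_ofSeq.2 <| (ofSeq_le_ofSeq.1 hxy).mono fun t ht ↦
    Real.rpow_le_rpow_of_exponent_ge h0 h1.le ht

theorem mk_hyperPow_lt_mk_hyperPow (h0 : 0 < α) (h1 : α < 1) {x y : ℝ*} (hxy : x < y)
    (hinf : mk (y - x) < 0) : mk (hyperPow α x) < mk (hyperPow α y) := by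
  have hpos := mk_hyperPow_pos h0 h1 (tendsto_atTop_iff.2 ⟨sub_pos.2 hxy, hinf⟩)
  have hx : mk (hyperPow α x) ≠ ⊤ := by simpa using (hyperPow_pos h0 x).ne'
  rw [← add_sub_cancel x y, hyperPow_add h0, mk_mul]
  simpa using (add_lt_add_iff_right_of_ne_top hx).2 hpos

end HyperPow

section GapScale

open Asymptotics Hyperreal ArchimedeanClass

/-- An infinite scale `T` and a sequence `κ` of hyperreals commensurable with `T`, growing so fast
that each `κ j` is repeatedly far beyond the sum of its predecessors: a block of gaps seen from an
infinitely distant index. -/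
structure IsGapScale (r : ℝ) (T : ℝ*) (κ : ℕ → ℝ*) : Prop where
  two_lt : 2 < r
  tendsto : T.Tendsto atTop
  monotone : Monotone κ
  mk_le (i : ℕ) : mk T ≤ mk (κ i)
  pow_mul_le (j : ℕ) : (r : ℝ*) ^ j * T ≤ T + ∑ i ∈ Finset.range j, κ i

theorem tendsto_sum_range_atTop_of_strictMono {k : ℕ → ℕ} (hk : StrictMono k) :
    Tendsto (fun n ↦ ∑ i ∈ Finset.range n, k i) atTop atTop := by
  refine (tendsto_add_atTop_iff_nat 1).1 (tendsto_atTop_mono (fun n ↦ ?_) tendsto_id)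
  exact (hk.id_le n).trans (Finset.single_le_sum_of_canonicallyOrdered (by simp))

theorem isGapScale_ofSeq {r : ℝ} {k n : ℕ → ℕ} (hr : 2 < r) (hk : StrictMono k)
    (hratio : (fun N ↦ ((∑ i ∈ Finset.range (N + 1), k i : ℕ) : ℝ)) =O[atTop]
      fun N ↦ ((∑ i ∈ Finset.range N, k i : ℕ) : ℝ))
    (hn : ∀ t, t ≤ n t)
    (hwin : ∀ t, ∀ J ≤ t, r ^ J * ((∑ i ∈ Finset.range (n t), k i : ℕ) : ℝ) ≤
      ((∑ i ∈ Finset.range (n t + J), k i : ℕ) : ℝ)) :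
    IsGapScale r (ofSeq fun t ↦ ((∑ i ∈ Finset.range (n t), k i : ℕ) : ℝ))
      fun i ↦ ofSeq fun t ↦ (k (n t + i) : ℝ) where
  two_lt := hr
  tendsto := by
    refine tendsto_ofSeq.2 ?_
    have hntop : Tendsto n atTop atTop := tendsto_atTop_mono hn tendsto_id
    exact (tendsto_natCast_atTop_atTop.comp
      ((tendsto_sum_range_atTop_of_strictMono hk).comp hntop)).mono_left Nat.hyperfilter_le_atTop
  monotone i j hij := ofSeq_le_ofSeq.2 <| .of_forall fun t ↦ by
    exact_mod_cast hk.monotone (Nat.add_le_add_left hij _)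
  mk_le i := by
    have hshift (j : ℕ) : (fun N ↦ ((∑ i ∈ Finset.range (N + j), k i : ℕ) : ℝ)) =O[atTop]
        fun N ↦ ((∑ i ∈ Finset.range N, k i : ℕ) : ℝ) := by
      induction j with
      | zero => exact isBigO_refl _ _
      | succ j ih => exact (hratio.comp_tendsto (tendsto_add_atTop_nat j)).trans ih
    have hntop : Tendsto n (hyperfilter ℕ : Filter ℕ) atTop :=
      (tendsto_atTop_mono hn tendsto_id).mono_left Nat.hyperfilter_le_atTop
    refine mk_ofSeq_le_mk_ofSeq.2 (.trans (.of_bound 1 (.of_forall fun t ↦ ?_))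
      ((hshift (i + 1)).comp_tendsto hntop))
    rw [Real.norm_natCast, one_mul, Function.comp_apply, Real.norm_natCast, ← add_assoc,
      Finset.sum_range_succ]
    exact_mod_cast Nat.le_add_left _ _
  pow_mul_le j := by
    rw [← ofSeq_sum]
    refine ofSeq_le_ofSeq.2 ?_
    filter_upwards [(eventually_ge_atTop j).filter_mono Nat.hyperfilter_le_atTop] with t ht
    simpa [Finset.sum_range_add] using hwin t j ht

namespace IsGapScale

variable {r : ℝ} {T : ℝ*} {κ : ℕ → ℝ*}

theorem pos (h : IsGapScale r T κ) : 0 < T := (tendsto_atTop_iff.1 h.tendsto).1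

theorem two_pow_mul_le (h : IsGapScale r T κ) (j : ℕ) :
    2 ^ j * T ≤ T + ∑ i ∈ Finset.range j, κ i := by
  refine le_trans ?_ (h.pow_mul_le j)
  gcongr
  · exact h.pos.le
  · exact_mod_cast coe_le_coe.2 h.two_lt.le

theorem le (h : IsGapScale r T κ) (i : ℕ) : T ≤ κ i := by
  have h1 := h.two_pow_mul_le 1
  rw [Finset.sum_range_one, pow_one] at h1
  linarith [h.monotone i.zero_le]

theorem sq_mul_le (h : IsGapScale r T κ) (i : ℕ) : (i + 1) ^ 2 * T ≤ 8 * κ i := by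
  have hpow (j : ℕ) : j ^ 3 + 8 ≤ 8 * 2 ^ j := by
    rcases lt_or_ge j 4 with hj | hj
    · interval_cases j <;> norm_num
    · induction j, hj using Nat.le_induction with
      | base => norm_num
      | succ j hj ih =>
        rw [pow_succ 2]
        nlinarith [Nat.mul_le_mul hj hj, Nat.mul_le_mul_right (j ^ 2) hj]
  have hpow' : ((i + 1 : ℝ*) ^ 3 + 8) ≤ 8 * 2 ^ (i + 1) := by exact_mod_cast hpow (i + 1)
  have hsum : ∑ l ∈ Finset.range (i + 1), κ l ≤ (i + 1) * κ i := by
    have := Finset.sum_le_card_nsmul (Finset.range (i + 1)) κ (κ i) fun l hl ↦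
      h.monotone (Finset.mem_range_succ_iff.1 hl)
    simpa [nsmul_eq_mul] using this
  refine le_of_mul_le_mul_left ?_ (by positivity : (0 : ℝ*) < i + 1)
  linarith [mul_le_mul_of_nonneg_right hpow' h.pos.le, h.two_pow_mul_le (i + 1)]

theorem exists_sum_le_mul (h : IsGapScale r T κ) (j : ℕ) :
    ∃ N : ℕ, ∑ i ∈ Finset.range j, κ i ≤ N * T := by
  choose n hn using h.mk_le
  refine ⟨∑ i ∈ Finset.range j, n i, ?_⟩
  push_cast
  rw [Finset.sum_mul]
  gcongr with i
  exact (le_abs_self _).trans (by simpa [abs_of_pos h.pos] using hn i)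

theorem frequently_lt (h : IsGapScale r T κ) (m : ℕ) :
    ∃ᶠ j in atTop, m * T + ∑ i ∈ Finset.range j, κ i < κ j := by
  intro hev
  obtain ⟨j₀, hj₀⟩ := eventually_atTop.1 hev
  obtain ⟨N, hN⟩ := h.exists_sum_le_mul j₀
  have hdouble (l : ℕ) :
      m * T + ∑ i ∈ Finset.range (j₀ + l), κ i ≤ 2 ^ l * ((m + N) * T) := by
    induction l with
    | zero => simpa [add_mul] using hN
    | succ l ih =>
      rw [← add_assoc, Finset.sum_range_succ, pow_succ]
      linarith [not_lt.1 (hj₀ (j₀ + l) (Nat.le_add_right _ _))]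
  have hbound (l : ℕ) : (r / 2) ^ l ≤ 1 + (m + N) := by
    have hr : (1 : ℝ) < r := one_lt_two.trans h.two_lt
    suffices r ^ l ≤ 2 ^ l * (1 + (m + N)) by
      rw [div_pow, div_le_iff₀ (by positivity)]
      linarith
    have hT : ((r ^ (j₀ + l) : ℝ) : ℝ*) * T ≤ (1 + 2 ^ l * (m + N) : ℝ) * T := by
      have hm : 0 ≤ m * T := mul_nonneg m.cast_nonneg h.pos.le
      have hpow := h.pow_mul_le (j₀ + l)
      have hcoe (x : ℝ) : (x : ℝ*) = coeRingHom x := rfl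
      simp only [hcoe, map_pow, map_add, map_mul, map_one, map_ofNat, map_natCast]
        at hpow ⊢
      linarith [hdouble l]
    calc r ^ l ≤ r ^ (j₀ + l) := pow_le_pow_right₀ hr.le (Nat.le_add_left _ _)
      _ ≤ 1 + 2 ^ l * (m + N) := coe_le_coe.1 (le_of_mul_le_mul_right hT h.pos)
      _ ≤ 2 ^ l * (1 + (m + N)) := by linarith [one_le_pow₀ (one_le_two (α := ℝ)) (n := l)]
  obtain ⟨l, hl⟩ := pow_unbounded_of_one_lt (1 + (m + N) : ℝ) ((one_lt_div two_pos).2 h.two_lt)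
  exact hl.not_ge (hbound l)

end IsGapScale

end GapScale

section Weight

open Polynomial Asymptotics Hyperreal ArchimedeanClass

variable {α : ℝ} {B : Multiset ℂ} {H : ℕ → ℕ} {w w' : ℕ}

/-- The hyperreals having a positive integer multiple `[p_t(α)]` with `p_t ∈ ℤ[X]` such that
`p_t(β) = O(β ^ (w * H t))` for every `β ∈ B`: the elements of weight at most `w` relative to the
scale `H`. -/
def weightSubmodule (α : ℝ) (B : Multiset ℂ) (H : ℕ → ℕ) (w : ℕ) : Submodule ℚ ℝ* where
  carrier := {x | ∃ n : ℕ, n ≠ 0 ∧ ∃ p : ℕ → ℤ[X], n * x = ofSeq (fun t ↦ aeval α (p t)) ∧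
    ∀ β ∈ B, (fun t ↦ aeval β (p t)) =O[hyperfilter ℕ] fun t ↦ ‖β‖ ^ (w * H t)}
  zero_mem' := ⟨1, one_ne_zero, 0, by simp; rfl, fun β _ ↦ by simpa using isBigO_zero _ _⟩
  add_mem' := by
    rintro x y ⟨m, hm, p, hp, hpβ⟩ ⟨n, hn, q, hq, hqβ⟩
    refine ⟨m * n, mul_ne_zero hm hn, fun t ↦ n * p t + m * q t, ?_, fun β hβ ↦ ?_⟩
    · have : ((m * n : ℕ) : ℝ*) * (x + y) = n * (m * x) + m * (n * y) := by push_cast; ring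
      rw [this, hp, hq]
      simp only [map_add, map_mul, map_natCast]
      rfl
    · simp only [map_add, map_mul, map_natCast]
      exact ((hpβ β hβ).const_mul_left _).add ((hqβ β hβ).const_mul_left _)
  smul_mem' := by
    rintro c x ⟨n, hn, p, hp, hpβ⟩
    refine ⟨c.den * n, mul_ne_zero c.den_nz hn, fun t ↦ c.num * p t, ?_, fun β hβ ↦ ?_⟩
    · have hc : (c.den : ℝ*) * c = c.num := by exact_mod_cast c.den_mul_eq_num
      have : ((c.den * n : ℕ) : ℝ*) * (c • x) = c.num * (n * x) := by
        rw [← hc, Rat.smul_def]; push_cast; ring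
      rw [this, hp]
      simp only [map_mul, map_intCast]
      rfl
    · simp only [map_mul, map_intCast]
      exact (hpβ β hβ).const_mul_left _

theorem mul_mem_weightSubmodule {x y : ℝ*} (hx : x ∈ weightSubmodule α B H w)
    (hy : y ∈ weightSubmodule α B H w') : x * y ∈ weightSubmodule α B H (w + w') := by
  obtain ⟨m, hm, p, hp, hpβ⟩ := hx
  obtain ⟨n, hn, q, hq, hqβ⟩ := hy
  refine ⟨m * n, mul_ne_zero hm hn, fun t ↦ p t * q t, ?_, fun β hβ ↦ ?_⟩
  · have : ((m * n : ℕ) : ℝ*) * (x * y) = (m * x) * (n * y) := by push_cast; ring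
    rw [this, hp, hq]
    simp only [map_mul]
    rfl
  · simp only [map_mul, add_mul, pow_add]
    exact (hpβ β hβ).mul (hqβ β hβ)

theorem weightSubmodule_mono (hB : ∀ β ∈ B, 1 ≤ ‖β‖) : Monotone (weightSubmodule α B H) := by
  rintro w w' hw x ⟨n, hn, p, hp, hpβ⟩
  refine ⟨n, hn, p, hp, fun β hβ ↦ (hpβ β hβ).trans (.of_bound 1 (.of_forall fun t ↦ ?_))⟩
  rw [one_mul, Real.norm_of_nonneg (by positivity), Real.norm_of_nonneg (by positivity)]
  exact pow_le_pow_right₀ (hB β hβ) (Nat.mul_le_mul_right _ hw)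

theorem hyperPow_mem_weightSubmodule (hB : ∀ β ∈ B, 1 ≤ ‖β‖) {f : ℕ → ℕ}
    (hf : ofSeq (fun t ↦ (f t : ℝ)) ≤ w * ofSeq fun t ↦ (H t : ℝ)) :
    hyperPow α (ofSeq fun t ↦ (f t : ℝ)) ∈ weightSubmodule α B H w := by
  refine ⟨1, one_ne_zero, fun t ↦ X ^ f t, ?_, fun β hβ ↦ .of_bound 1 ?_⟩
  · simp only [Nat.cast_one, one_mul, hyperPow_ofSeq, Real.rpow_natCast, map_pow, aeval_X]
  · filter_upwards [ofSeq_le_ofSeq.1 hf] with t ht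
    rw [map_pow, aeval_X, norm_pow, one_mul, Real.norm_of_nonneg (by positivity)]
    have ht' : (f t : ℝ) ≤ (w : ℝ) * H t := ht
    exact pow_le_pow_right₀ (hB β hβ) (by exact_mod_cast ht')

theorem pow_mem_weightSubmodule {x : ℝ*} (hx : x ∈ weightSubmodule α B H w) (n : ℕ) :
    x ^ n ∈ weightSubmodule α B H (n * w) := by
  induction n with
  | zero =>
    exact ⟨1, one_ne_zero, 1, by simp; rfl, fun β _ ↦ .of_bound 1 (by simp)⟩
  | succ n ih =>
    rw [pow_succ, add_one_mul]
    exact mul_mem_weightSubmodule ih hx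

theorem exists_forall_bound_of_forall_isBigO {ι E F : Type*} [Norm E] [SeminormedAddCommGroup F]
    {l : Filter ℕ} (S : Multiset ι) {f : ι → ℕ → E} {g : ι → ℕ → F}
    (h : ∀ i ∈ S, f i =O[l] g i) : ∃ C : ℝ, ∀ᶠ t in l, ∀ i ∈ S, ‖f i t‖ ≤ C * ‖g i t‖ := by
  induction S using Multiset.induction_on with
  | empty => simp
  | cons i S ih =>
    obtain ⟨C, hC⟩ := ih fun j hj ↦ h j (Multiset.mem_cons_of_mem hj)
    obtain ⟨D, hD⟩ := (h i (Multiset.mem_cons_self i S)).bound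
    refine ⟨max C D, ?_⟩
    filter_upwards [hC, hD] with t hCt hDt j hj
    rcases Multiset.mem_cons.1 hj with rfl | hj
    · exact hDt.trans (by gcongr; exact le_max_right C D)
    · exact (hCt j hj).trans (by gcongr; exact le_max_left C D)

theorem eq_zero_of_mem_weightSubmodule (hαB : IsExpandingConjugates α B)
    (hH : Tendsto H (hyperfilter ℕ) atTop) {x : ℝ*} (hx : x ∈ weightSubmodule α B H w)
    (hmk : mk (hyperPow α ((w + 1 : ℕ) * ofSeq fun t ↦ (H t : ℝ))) ≤ mk x) : x = 0 := by
  obtain ⟨n, hn, p, hp, hpβ⟩ := hx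
  by_contra hx0
  have hne : ∀ᶠ t in hyperfilter ℕ, aeval α (p t) ≠ 0 := by
    refine Ultrafilter.eventually_not.2 fun hzero ↦ ?_
    exact mul_ne_zero (Nat.cast_ne_zero.2 hn) hx0 (hp.trans (ofSeq_eq_ofSeq.2 hzero))
  have hsmall : (fun t ↦ aeval α (p t)) =O[hyperfilter ℕ] fun t ↦ α ^ ((w + 1) * H t) := by
    have hpow : hyperPow α ((w + 1 : ℕ) * ofSeq fun t ↦ (H t : ℝ)) =
        ofSeq fun t ↦ α ^ ((w + 1) * H t) := by
      simp only [← Real.rpow_natCast, Nat.cast_mul]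
      rfl
    rw [← mk_ofSeq_le_mk_ofSeq, ← hpow, ← hp, mk_mul, mk_natCast hn, zero_add]
    exact hmk
  obtain ⟨a, ha⟩ := hsmall.bound
  obtain ⟨b, hb⟩ := exists_forall_bound_of_forall_isBigO B hpβ
  obtain ⟨M, hM⟩ := exists_forall_le_add_of_pow_le hαB.pos hαB.lt_one (a * b ^ B.card)
  obtain ⟨t, hat, hbt, hnet, hMt⟩ :=
    (ha.and (hb.and (hne.and (hH.eventually_gt_atTop M)))).exists
  simp only [norm_pow, abs_norm, Real.norm_eq_abs, abs_of_pos hαB.pos] at hat hbt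
  have := hM _ _ (hαB.pow_le_of_aeval_ne_zero hat hbt hnet)
  rw [add_one_mul] at this
  omega

end Weight

section DimensionCount

open Module

theorem exists_ne_zero_apply_mem {K X U : Type*} [Field K] [AddCommGroup X] [Module K X]
    [AddCommGroup U] [Module K U] [FiniteDimensional K X] (Φ : X →ₗ[K] U) (N O : Submodule K U)
    [FiniteDimensional K N] (hΦ : ∀ x, Φ x ∈ N ⊔ O) (hlt : finrank K N < finrank K X) :
    ∃ x ≠ 0, Φ x ∈ O := by
  have hmem (x : X) : (O.mkQ ∘ₗ Φ) x ∈ N.map O.mkQ := by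
    obtain ⟨n, hn, o, ho, hno⟩ := Submodule.mem_sup.1 (hΦ x)
    refine ⟨n, hn, ?_⟩
    rw [LinearMap.comp_apply, ← hno, map_add, O.mkQ_apply o, (Submodule.Quotient.mk_eq_zero O).2 ho,
      add_zero]
  obtain ⟨x, hx, hx0⟩ := Submodule.exists_mem_ne_zero_of_ne_bot <|
    LinearMap.ker_ne_bot_of_finrank_lt (f := (O.mkQ ∘ₗ Φ).codRestrict _ hmem)
      ((Submodule.finrank_map_le _ _).trans_lt hlt)
  refine ⟨x, hx0, ?_⟩
  simpa using congrArg Subtype.val (LinearMap.mem_ker.1 hx)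

theorem finrank_mul_le_mul_finrank {K A : Type*} [Field K] [CommRing A] [Algebra K A]
    (M N : Submodule K A) [FiniteDimensional K M] [FiniteDimensional K N] :
    finrank K (M * N : Submodule K A) ≤ finrank K M * finrank K N := by
  rw [← Submodule.mulMap_range, ← finrank_tensorProduct]
  exact (Submodule.mulMap M N).finrank_range_le

theorem exists_eight_mul_lt_two_pow (q : ℕ) : ∃ n, 0 < n ∧ 8 * q ^ 2 * n ^ 2 + 1 < 2 ^ n := by
  have hlim := tendsto_pow_const_div_const_pow_of_one_lt 2 (one_lt_two (α := ℝ))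
  have hpos : (0 : ℝ) < (8 * (q : ℝ) ^ 2 + 1)⁻¹ := by positivity
  obtain ⟨n, hsmall, hn⟩ := ((hlim.eventually_lt_const hpos).and (eventually_gt_atTop 0)).exists
  rw [div_lt_iff₀ (by positivity), inv_mul_eq_div, lt_div_iff₀ (by positivity)] at hsmall
  have hsmall' : n ^ 2 * (8 * q ^ 2 + 1) < 2 ^ n := by exact_mod_cast hsmall
  exact ⟨n, hn, by nlinarith⟩

theorem exists_le_two_mul_of_le_add_one_pow {f : ℕ → ℕ} (h0 : 1 ≤ f 0)
    (hf : ∀ ρ m, 8 * ρ < (m + 1) ^ 2 → f ρ ≤ (ρ + 1) ^ m) {q : ℕ} (hq : 0 < q) :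
    ∃ s, f ((s + 1) * q) ≤ 2 * f (s * q) := by
  by_contra! hlt
  have hpow (s : ℕ) : 2 ^ s ≤ f (s * q) := by
    induction s with
    | zero => simpa using h0
    | succ s ih => exact (by rw [pow_succ]; omega : 2 ^ (s + 1) ≤ 2 * f (s * q)).trans (hlt s).le
  obtain ⟨n, hn, hlarge⟩ := exists_eight_mul_lt_two_pow q
  have hsmall := (hpow (8 * q * n ^ 2)).trans (hf _ (8 * q * n) (by nlinarith))
  have hexp : 8 * q * n ^ 2 = n * (8 * q * n) := by ring
  rw [hexp, pow_mul, Nat.pow_le_pow_iff_left (by positivity)] at hsmall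
  nlinarith

end DimensionCount

section Approx

open ArchimedeanClass

variable {K : Type*} [Field K] [LinearOrder K] [IsStrictOrderedRing K] {S : Subalgebra ℚ K}
  {x y : K}

theorem mk_le_mk_pow_sub_pow {a b : K} (ha : 0 ≤ mk a) (hb : 0 ≤ mk b)
    (hab : mk y ≤ mk (a - b)) (n : ℕ) : mk y ≤ mk (a ^ n - b ^ n) := by
  induction n with
  | zero => simp
  | succ n ih =>
    have hsplit : a ^ (n + 1) - b ^ (n + 1) = a ^ n * (a - b) + (a ^ n - b ^ n) * b := by ring
    rw [hsplit]
    refine (le_min ?_ ?_).trans (min_le_mk_add _ _)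
    · rw [mk_mul, mk_pow]
      exact le_add_of_nonneg_of_le (nsmul_nonneg ha n) hab
    · rw [mk_mul]
      exact le_add_of_le_of_nonneg ih hb

/-- The elements of an ordered field that are `O(y)`. -/
def bigOSubmodule (y : K) : Submodule ℚ K where
  carrier := {x | mk y ≤ mk x}
  zero_mem' := by simp
  add_mem' {a b} ha hb := (le_min ha hb : mk y ≤ _).trans (min_le_mk_add a b)
  smul_mem' c x hx := (show mk y ≤ mk x from hx).trans (mk_le_mk_smul x c)

theorem mem_bigOSubmodule : x ∈ bigOSubmodule y ↔ mk y ≤ mk x := Iff.rfl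

/-- The elements that agree up to `O(y)` with an element of a subalgebra `S` of finite elements;
here `y` is finite. -/
def approxSubalgebra (S : Subalgebra ℚ K) (y : K) (hS : ∀ s ∈ S, 0 ≤ mk s) (hy : 0 ≤ mk y) :
    Subalgebra ℚ K where
  carrier := {x | ∃ s ∈ S, x - s ∈ bigOSubmodule y}
  add_mem' := by
    rintro a b ⟨s, hs, ha⟩ ⟨t, ht, hb⟩
    exact ⟨s + t, add_mem hs ht, by simpa only [add_sub_add_comm] using add_mem ha hb⟩
  mul_mem' := by
    rintro a b ⟨s, hs, ha⟩ ⟨t, ht, hb⟩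
    have hb0 : 0 ≤ mk b := by
      rw [← sub_add_cancel b t]
      exact (le_min (hy.trans hb) (hS t ht)).trans (min_le_mk_add _ _)
    refine ⟨s * t, mul_mem hs ht, ?_⟩
    have hsplit : a * b - s * t = (a - s) * b + s * (b - t) := by ring
    rw [hsplit]
    refine add_mem ?_ ?_ <;> rw [mem_bigOSubmodule, mk_mul]
    · exact le_add_of_le_of_nonneg ha hb0
    · exact le_add_of_nonneg_of_le (hS s hs) hb
  algebraMap_mem' c := ⟨_, S.algebraMap_mem c, by simp⟩

variable {hS : ∀ s ∈ S, 0 ≤ mk s} {hy : 0 ≤ mk y}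

theorem le_approxSubalgebra : S ≤ approxSubalgebra S y hS hy :=
  fun s hs ↦ ⟨s, hs, by simp⟩

theorem mem_approxSubalgebra_of_sub_mem {a : K} (ha : a ∈ approxSubalgebra S y hS hy)
    (hxa : x - a ∈ bigOSubmodule y) : x ∈ approxSubalgebra S y hS hy := by
  obtain ⟨s, hs, has⟩ := ha
  exact ⟨s, hs, by simpa using add_mem hxa has⟩

theorem mk_eq_zero_of_mk_sub_one_pos (hx : 0 < mk (x - 1 : K)) : mk x = 0 := by
  have := mk_add_eq_mk_right (a := x - 1) (b := 1) (by simpa using hx)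
  simpa using this

theorem ne_zero_of_mk_sub_one_pos (hx : 0 < mk (x - 1 : K)) : x ≠ 0 := by
  rintro rfl
  simpa using mk_eq_zero_of_mk_sub_one_pos hx

theorem inv_mem_approxSubalgebra (hx : x ∈ approxSubalgebra S y hS hy) (hx1 : 0 < mk (x - 1 : K))
    {n : ℕ} (hn : mk y ≤ n • mk (x - 1 : K)) : x⁻¹ ∈ approxSubalgebra S y hS hy := by
  have hmk := mk_eq_zero_of_mk_sub_one_pos hx1
  have hx0 := ne_zero_of_mk_sub_one_pos hx1
  refine mem_approxSubalgebra_of_sub_mem (a := ∑ i ∈ Finset.range n, (1 - x) ^ i)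
    (sum_mem fun i _ ↦ pow_mem (sub_mem (one_mem _) hx) i) ?_
  have hgeom : x⁻¹ - ∑ i ∈ Finset.range n, (1 - x) ^ i = x⁻¹ * (1 - x) ^ n := by
    have := geom_sum_mul_neg (1 - x) n
    rw [sub_sub_cancel] at this
    field_simp
    linear_combination -this
  rwa [mem_bigOSubmodule, hgeom, mk_mul, mk_inv, hmk, neg_zero, zero_add, mk_pow, mk_sub_comm]

end Approx

section AlgebraicRelation

open Module Hyperreal ArchimedeanClass

variable {α r : ℝ} {T : ℝ*} {κ : ℕ → ℝ*}

/-- The `ℚ`-algebra generated by the powers `α ^ κ i`. -/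
noncomputable def powAlgebra (α : ℝ) (κ : ℕ → ℝ*) : Subalgebra ℚ ℝ* :=
  Algebra.adjoin ℚ (Set.range fun i ↦ hyperPow α (κ i))

/-- The span of the monomials `α ^ (∑ i, a i * κ i)`, with natural coefficients `a i`, whose
exponent is at most `b`. -/
noncomputable def monomialSpan (α : ℝ) (κ : ℕ → ℝ*) (b : ℝ*) : Submodule ℚ ℝ* :=
  Submodule.span ℚ (hyperPow α '' {e | e ∈ AddSubmonoid.closure (Set.range κ) ∧ e ≤ b})

theorem hyperPow_mem_powAlgebra (h0 : 0 < α) {e : ℝ*}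
    (he : e ∈ AddSubmonoid.closure (Set.range κ)) : hyperPow α e ∈ powAlgebra α κ := by
  induction he using AddSubmonoid.closure_induction with
  | mem e he =>
    obtain ⟨i, rfl⟩ := he
    exact Algebra.subset_adjoin ⟨i, rfl⟩
  | zero => exact hyperPow_zero (α := α) ▸ one_mem _
  | add e f _ _ he hf => exact hyperPow_add h0 e f ▸ mul_mem he hf

theorem powAlgebra_le_span (h0 : 0 < α) : Subalgebra.toSubmodule (powAlgebra α κ) ≤
    Submodule.span ℚ (hyperPow α '' AddSubmonoid.closure (Set.range κ)) := by
  rw [powAlgebra, Algebra.adjoin_eq_span]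
  refine Submodule.span_mono fun x hx ↦ ?_
  induction hx using Submonoid.closure_induction with
  | mem x hx =>
    obtain ⟨i, rfl⟩ := hx
    exact ⟨κ i, AddSubmonoid.subset_closure ⟨i, rfl⟩, rfl⟩
  | one => exact ⟨0, zero_mem _, hyperPow_zero⟩
  | mul x y _ _ hx hy =>
    obtain ⟨e, he, rfl⟩ := hx
    obtain ⟨f, hf, rfl⟩ := hy
    exact ⟨e + f, add_mem he hf, hyperPow_add h0 e f⟩

theorem monomialSpan_le_powAlgebra (h0 : 0 < α) (b : ℝ*) :
    monomialSpan α κ b ≤ Subalgebra.toSubmodule (powAlgebra α κ) := by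
  refine Submodule.span_le.2 ?_
  rintro _ ⟨e, ⟨he, -⟩, rfl⟩
  exact hyperPow_mem_powAlgebra h0 he

theorem powAlgebra_le_monomialSpan_sup (h0 : 0 < α) (h1 : α < 1) (b : ℝ*) :
    Subalgebra.toSubmodule (powAlgebra α κ) ≤
      monomialSpan α κ b ⊔ bigOSubmodule (hyperPow α b) := by
  refine (powAlgebra_le_span h0).trans (Submodule.span_le.2 ?_)
  rintro _ ⟨e, he, rfl⟩
  rcases le_total e b with heb | hbe
  · exact Submodule.mem_sup_left (Submodule.subset_span ⟨e, ⟨he, heb⟩, rfl⟩)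
  · exact Submodule.mem_sup_right (mk_hyperPow_le_mk_hyperPow h0 h1 hbe)

theorem mk_nonneg_of_mem_powAlgebra (h0 : 0 < α) (h1 : α < 1) (hκ : ∀ i, 0 ≤ κ i) {x : ℝ*}
    (hx : x ∈ powAlgebra α κ) : 0 ≤ mk x := by
  have hspan : Submodule.span ℚ (hyperPow α '' AddSubmonoid.closure (Set.range κ)) ≤
      bigOSubmodule 1 := by
    refine Submodule.span_le.2 ?_
    rintro _ ⟨e, he, rfl⟩
    have he0 : 0 ≤ e := by
      refine (AddSubmonoid.closure_le (S := AddSubmonoid.nonneg ℝ*)).2 ?_ he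
      rintro _ ⟨i, rfl⟩
      exact hκ i
    simpa [mem_bigOSubmodule, hyperPow_zero] using mk_hyperPow_le_mk_hyperPow h0 h1 he0
  simpa [mem_bigOSubmodule] using hspan (powAlgebra_le_span h0 hx)

theorem one_le_finrank_monomialSpan {b : ℝ*} [FiniteDimensional ℚ (monomialSpan α κ b)]
    (hb : 0 ≤ b) : 1 ≤ finrank ℚ (monomialSpan α κ b) := by
  refine Submodule.one_le_finrank_iff.2 (Submodule.ne_bot_iff _ |>.2 ⟨1, ?_, one_ne_zero⟩)
  exact Submodule.subset_span ⟨0, ⟨zero_mem _, hb⟩, hyperPow_zero⟩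

namespace IsGapScale

theorem exists_sum_eq_of_mem_closure (h : IsGapScale r T κ) {m ρ : ℕ}
    (hm : 8 * ρ < (m + 1) ^ 2) {e : ℝ*} (he : e ∈ AddSubmonoid.closure (Set.range κ))
    (heρ : e ≤ ρ * T) : ∃ a : Fin m → Fin (ρ + 1), ∑ i, ((a i : ℕ) : ℝ*) * κ i = e := by
  obtain ⟨a, rfl⟩ := AddSubmonoid.mem_closure_range_iff.1 he
  have hκ (i : ℕ) : 0 ≤ κ i := h.pos.le.trans (h.le i)
  have hterm (i : ℕ) : a i * κ i ≤ ρ * T := by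
    by_cases hi : i ∈ a.support
    · rw [← nsmul_eq_mul]
      exact (Finset.single_le_sum (f := fun i ↦ a i • κ i)
        (fun j _ ↦ nsmul_nonneg (hκ j) _) hi).trans heρ
    · rw [Finsupp.notMem_support_iff.1 hi, Nat.cast_zero, zero_mul]
      exact mul_nonneg ρ.cast_nonneg h.pos.le
  have hle (i : ℕ) : a i ≤ ρ := by
    have := (mul_le_mul_of_nonneg_left (h.le i) (a i).cast_nonneg).trans (hterm i)
    exact_mod_cast le_of_mul_le_mul_right this h.pos
  have hzero (i : ℕ) (hi : m ≤ i) : a i = 0 := by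
    by_contra hai
    have h1 : (1 : ℝ*) ≤ a i := by exact_mod_cast Nat.one_le_iff_ne_zero.2 hai
    have hT : ((8 * ρ : ℕ) : ℝ*) * T < ((i + 1) ^ 2 : ℕ) * T :=
      mul_lt_mul_of_pos_right (by exact_mod_cast hm.trans_le (by gcongr)) h.pos
    push_cast at hT
    linarith [h.sq_mul_le i, hterm i, mul_le_mul_of_nonneg_right h1 (hκ i)]
  refine ⟨fun i ↦ ⟨a i, Nat.lt_succ_of_le (hle i)⟩, ?_⟩
  rw [Finsupp.sum_of_support_subset (s := Finset.range m) a (fun i hi ↦ ?_) _ (by simp),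
    Finset.sum_range]
  · simp only [nsmul_eq_mul]
  · by_contra hmi
    exact Finsupp.mem_support_iff.1 hi (hzero i (by simpa using hmi))

theorem monomialSpan_le_span_range (h : IsGapScale r T κ) {m ρ : ℕ}
    (hm : 8 * ρ < (m + 1) ^ 2) : monomialSpan α κ (ρ * T) ≤ Submodule.span ℚ
      (Set.range fun a : Fin m → Fin (ρ + 1) ↦ hyperPow α (∑ i, ((a i : ℕ) : ℝ*) * κ i)) := by
  refine Submodule.span_mono ?_
  rintro _ ⟨e, ⟨he, heρ⟩, rfl⟩
  obtain ⟨a, rfl⟩ := h.exists_sum_eq_of_mem_closure hm he heρ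
  exact ⟨a, rfl⟩

theorem finiteDimensional_monomialSpan (h : IsGapScale r T κ) (ρ : ℕ) :
    FiniteDimensional ℚ (monomialSpan α κ (ρ * T)) :=
  have := FiniteDimensional.span_of_finite ℚ <| Set.finite_range
    fun a : Fin (8 * ρ) → Fin (ρ + 1) ↦ hyperPow α (∑ i, ((a i : ℕ) : ℝ*) * κ i)
  Submodule.finiteDimensional_of_le <|
    h.monomialSpan_le_span_range (by nlinarith : 8 * ρ < (8 * ρ + 1) ^ 2)

theorem finrank_monomialSpan_le (h : IsGapScale r T κ) {m ρ : ℕ} (hm : 8 * ρ < (m + 1) ^ 2) :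
    finrank ℚ (monomialSpan α κ (ρ * T)) ≤ (ρ + 1) ^ m := by
  have := FiniteDimensional.span_of_finite ℚ <| Set.finite_range
    fun a : Fin m → Fin (ρ + 1) ↦ hyperPow α (∑ i, ((a i : ℕ) : ℝ*) * κ i)
  refine (Submodule.finrank_mono (h.monomialSpan_le_span_range hm)).trans ?_
  refine (finrank_range_le_card _).trans_eq ?_
  simp

theorem exists_finrank_monomialSpan_le (h : IsGapScale r T κ) {q : ℕ} (hq : 0 < q) :
    ∃ s : ℕ, finrank ℚ (monomialSpan α κ (((s + 1) * q : ℕ) * T)) ≤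
      2 * finrank ℚ (monomialSpan α κ ((s * q : ℕ) * T)) := by
  refine exists_le_two_mul_of_le_add_one_pow
    (f := fun ρ ↦ finrank ℚ (monomialSpan α κ (ρ * T))) ?_
    (fun ρ m ↦ h.finrank_monomialSpan_le) hq
  have := h.finiteDimensional_monomialSpan (α := α) 0
  exact one_le_finrank_monomialSpan (by simp)

end IsGapScale

variable {B : Multiset ℂ} {H : ℕ → ℕ} {ξ g : ℝ*}

theorem exists_ofSeq_natCast_of_mem_closure
    (hnat : ∀ i, ∃ f : ℕ → ℕ, κ i = ofSeq fun t ↦ (f t : ℝ)) {e : ℝ*}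
    (he : e ∈ AddSubmonoid.closure (Set.range κ)) : ∃ f : ℕ → ℕ, e = ofSeq fun t ↦ (f t : ℝ) := by
  induction he using AddSubmonoid.closure_induction with
  | mem e he =>
    obtain ⟨i, rfl⟩ := he
    exact hnat i
  | zero => exact ⟨0, by simp; rfl⟩
  | add e e' _ _ he he' =>
    obtain ⟨f, rfl⟩ := he
    obtain ⟨f', rfl⟩ := he'
    exact ⟨f + f', by simp only [Pi.add_apply, Nat.cast_add]; rfl⟩

theorem monomialSpan_le_weightSubmodule (hB : ∀ β ∈ B, 1 ≤ ‖β‖)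
    (hnat : ∀ i, ∃ f : ℕ → ℕ, κ i = ofSeq fun t ↦ (f t : ℝ)) (ρ : ℕ) :
    monomialSpan α κ (ρ * ofSeq fun t ↦ (H t : ℝ)) ≤ weightSubmodule α B H ρ := by
  refine Submodule.span_le.2 ?_
  rintro _ ⟨e, ⟨he, heρ⟩, rfl⟩
  obtain ⟨f, rfl⟩ := exists_ofSeq_natCast_of_mem_closure hnat he
  exact hyperPow_mem_weightSubmodule hB heρ

theorem hyperPow_natCast_mul (h0 : 0 < α) (n : ℕ) (x : ℝ*) :
    hyperPow α (n * x) = hyperPow α x ^ n := by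
  induction n with
  | zero => simp [hyperPow_zero]
  | succ n ih => rw [Nat.cast_succ, add_one_mul, hyperPow_add h0, ih, pow_succ]

theorem mk_hyperPow_le_mk_sub_one (h0 : 0 < α) (h1 : α < 1) (hκ : IsGapScale r T κ)
    (hg : ∀ j, mk (hyperPow α (κ j)) ≤ mk (g - ∏ i ∈ Finset.range j, (1 + hyperPow α (κ i)))) :
    mk (hyperPow α T) ≤ mk (g - 1 : ℝ*) :=
  (mk_hyperPow_le_mk_hyperPow h0 h1 (hκ.le 0)).trans (by simpa using hg 0)

theorem inv_mem_approxSubalgebra_powAlgebra (h0 : 0 < α) (h1 : α < 1) (hκ : IsGapScale r T κ)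
    (hg : ∀ j, mk (hyperPow α (κ j)) ≤ mk (g - ∏ i ∈ Finset.range j, (1 + hyperPow α (κ i))))
    (V : ℕ) {hS : ∀ s ∈ powAlgebra α κ, 0 ≤ mk s} {hy : 0 ≤ mk (hyperPow α (V * T))} :
    g⁻¹ ∈ approxSubalgebra (powAlgebra α κ) (hyperPow α (V * T)) hS hy := by
  have hg1 := mk_hyperPow_le_mk_sub_one h0 h1 hκ hg
  obtain ⟨j, -, hj⟩ := (frequently_atTop.1 (hκ.frequently_lt V)) 0
  have hVj : V * T ≤ κ j := by
    refine le_trans ?_ hj.le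
    exact le_add_of_nonneg_right (Finset.sum_nonneg fun i _ ↦ hκ.pos.le.trans (hκ.le i))
  refine inv_mem_approxSubalgebra ⟨∏ i ∈ Finset.range j, (1 + hyperPow α (κ i)), ?_, ?_⟩
    ((mk_hyperPow_pos h0 h1 hκ.tendsto).trans_le hg1) (n := V) ?_
  · exact prod_mem fun i _ ↦ add_mem (one_mem _) (Algebra.subset_adjoin ⟨i, rfl⟩)
  · exact (mk_hyperPow_le_mk_hyperPow h0 h1 hVj).trans (hg j)
  · rw [hyperPow_natCast_mul h0, mk_pow]
    exact nsmul_le_nsmul_right hg1 V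

theorem isAlgebraic_of_sum_eq_zero {R A : Type*} [CommRing R] [CommRing A] [Algebra R A] {q : ℕ}
    {c : Fin q → R} (hc : c ≠ 0) {x : A} (h : ∑ k : Fin q, x ^ (k : ℕ) * algebraMap R A (c k) = 0) :
    IsAlgebraic R x := by
  obtain ⟨k, hk⟩ := Function.ne_iff.1 hc
  refine ⟨∑ k : Fin q, Polynomial.monomial k (c k), fun h0 ↦ hk ?_, ?_⟩
  · simpa [Polynomial.coeff_monomial, Fin.val_inj] using congrArg (Polynomial.coeff · (k : ℕ)) h0
  · simpa [Polynomial.aeval_monomial, mul_comm] using h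

theorem pow_mul_mem_mul_monomialSpan_sup (h0 : 0 < α) (h1 : α < 1) {L : ℝ}
    (hκ : IsGapScale r T κ) (hξg : ξ * g = L)
    (hg : ∀ j, mk (hyperPow α (κ j)) ≤ mk (g - ∏ i ∈ Finset.range j, (1 + hyperPow α (κ i))))
    (V k : ℕ) {x : ℝ*} (hx : x ∈ powAlgebra α κ) : ξ ^ k * x ∈
      Subalgebra.toSubmodule (Algebra.adjoin ℚ {(L : ℝ*)}) * monomialSpan α κ (V * T) ⊔
        bigOSubmodule (hyperPow α (V * T)) := by
  have hS (s : ℝ*) (hs : s ∈ powAlgebra α κ) : 0 ≤ mk s :=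
    mk_nonneg_of_mem_powAlgebra h0 h1 (fun i ↦ hκ.pos.le.trans (hκ.le i)) hs
  have hy : 0 ≤ mk (hyperPow α (V * T)) := by
    rw [hyperPow_natCast_mul h0, mk_pow]
    exact nsmul_nonneg (mk_hyperPow_pos h0 h1 hκ.tendsto).le V
  have hg0 : g ≠ 0 := ne_zero_of_mk_sub_one_pos <|
    (mk_hyperPow_pos h0 h1 hκ.tendsto).trans_le (mk_hyperPow_le_mk_sub_one h0 h1 hκ hg)
  obtain ⟨s, hs, hsx⟩ := mul_mem
    (pow_mem (inv_mem_approxSubalgebra_powAlgebra h0 h1 hκ hg V (hS := hS) (hy := hy)) k)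
    (le_approxSubalgebra hx)
  obtain ⟨m, hm, o, ho, hmo⟩ := Submodule.mem_sup.1 <|
    powAlgebra_le_monomialSpan_sup h0 h1 (V * T) hs
  have hsplit : ξ ^ k * x = (L : ℝ*) ^ k * m + (L : ℝ*) ^ k * (o + (g⁻¹ ^ k * x - s)) := by
    have hinv : g ^ k * g⁻¹ ^ k = 1 := by rw [← mul_pow, mul_inv_cancel₀ hg0, one_pow]
    rw [← hmo, ← hξg]
    linear_combination -(ξ ^ k * x) * hinv
  rw [hsplit]
  refine add_mem (Submodule.mem_sup_left (Submodule.mul_mem_mul ?_ hm)) (Submodule.mem_sup_right ?_)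
  · exact pow_mem (Algebra.self_mem_adjoin_singleton ℚ _) k
  · rw [mem_bigOSubmodule, mk_mul, mk_pow]
    exact le_add_of_nonneg_of_le (nsmul_nonneg (archimedeanClassMk_coe_nonneg L) k) (add_mem ho hsx)

theorem finiteDimensional_adjoin_coe {L : ℝ} (hL : IsAlgebraic ℚ L) :
    FiniteDimensional ℚ (Subalgebra.toSubmodule (Algebra.adjoin ℚ {(L : ℝ*)})) :=
  Module.Finite.iff_fg.2 (hL.isIntegral.map coeRingHom.toRatAlgHom).fg_adjoin_singleton

/- The dimension count: passing from the exponent bound `R * T` to `(R + q) * T` at most doubles the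
number of monomials, and `q = 2 * dim W + 1` coefficients leave more unknowns than conditions. -/
theorem exists_ne_zero_sum_pow_mul_mem {L : ℝ} (hL : IsAlgebraic ℚ L) (h0 : 0 < α) (h1 : α < 1)
    (hκ : IsGapScale r T κ) (hξg : ξ * g = L)
    (hg : ∀ j, mk (hyperPow α (κ j)) ≤ mk (g - ∏ i ∈ Finset.range j, (1 + hyperPow α (κ i)))) :
    ∃ q R : ℕ, ∃ A : Fin q → monomialSpan α κ (R * T), A ≠ 0 ∧
      ∑ k : Fin q, ξ ^ (k : ℕ) * A k ∈ bigOSubmodule (hyperPow α ((R + q : ℕ) * T)) := by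
  set W := Subalgebra.toSubmodule (Algebra.adjoin ℚ {(L : ℝ*)})
  have : FiniteDimensional ℚ W := finiteDimensional_adjoin_coe hL
  set q := 2 * finrank ℚ W + 1 with hq
  obtain ⟨s, hs⟩ := hκ.exists_finrank_monomialSpan_le (α := α) (q := q) (by omega)
  rw [add_one_mul] at hs
  have := hκ.finiteDimensional_monomialSpan (α := α) (s * q)
  have := hκ.finiteDimensional_monomialSpan (α := α) (s * q + q)
  have : FiniteDimensional ℚ (W * monomialSpan α κ ((s * q + q : ℕ) * T) : Submodule ℚ ℝ*) :=
    Module.Finite.iff_fg.2 (.mul (Module.Finite.iff_fg.1 ‹_›) (Module.Finite.iff_fg.1 ‹_›))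
  have hpos : 1 ≤ finrank ℚ (monomialSpan α κ ((s * q : ℕ) * T)) :=
    one_le_finrank_monomialSpan (mul_nonneg (Nat.cast_nonneg _) hκ.pos.le)
  let Φ : (Fin q → monomialSpan α κ ((s * q : ℕ) * T)) →ₗ[ℚ] ℝ* :=
    LinearMap.lsum ℚ _ ℚ fun k ↦ LinearMap.mulLeft ℚ (ξ ^ (k : ℕ)) ∘ₗ Submodule.subtype _
  have hΦ (A) : Φ A = ∑ k : Fin q, ξ ^ (k : ℕ) * A k := by simp [Φ, LinearMap.lsum_apply]
  obtain ⟨A, hA, hAO⟩ := exists_ne_zero_apply_mem Φ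
    (W * monomialSpan α κ ((s * q + q : ℕ) * T)) (bigOSubmodule _)
    (fun A ↦ by
      rw [hΦ]
      exact sum_mem fun k _ ↦ pow_mul_mem_mul_monomialSpan_sup h0 h1 hκ hξg hg _ k
        (monomialSpan_le_powAlgebra h0 _ (A k).2))
    ((finrank_mul_le_mul_finrank _ _).trans_lt (by rw [finrank_pi_fintype]; simp; nlinarith))
  exact ⟨q, s * q, A, hA, hΦ A ▸ hAO⟩

theorem isAlgebraic_powAlgebra {L : ℝ} (hL : IsAlgebraic ℚ L) (hαB : IsExpandingConjugates α B)
    (hκ : IsGapScale r (ofSeq fun t ↦ (H t : ℝ)) κ)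
    (hnat : ∀ i, ∃ f : ℕ → ℕ, κ i = ofSeq fun t ↦ (f t : ℝ))
    (hξ : ξ ∈ weightSubmodule α B H 1) (hξg : ξ * g = L)
    (hg : ∀ j, mk (hyperPow α (κ j)) ≤ mk (g - ∏ i ∈ Finset.range j, (1 + hyperPow α (κ i)))) :
    IsAlgebraic (powAlgebra α κ) ξ := by
  obtain ⟨q, R, A, hA, hsmall⟩ :=
    exists_ne_zero_sum_pow_mul_mem hL hαB.pos hαB.lt_one hκ hξg hg
  have hB (β) (hβ : β ∈ B) : 1 ≤ ‖β‖ := (hαB.one_lt_norm β hβ).le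
  obtain ⟨k₀, hk₀⟩ := Function.ne_iff.1 hA
  have hweight : ∑ k : Fin q, ξ ^ (k : ℕ) * A k ∈ weightSubmodule α B H (R + q - 1) :=
    sum_mem fun k _ ↦ weightSubmodule_mono hB (by have := k.2; omega) <|
      mul_mem_weightSubmodule (pow_mem_weightSubmodule hξ k)
        (monomialSpan_le_weightSubmodule hB hnat R (A k).2)
  have hH : Tendsto H (hyperfilter ℕ) atTop :=
    tendsto_natCast_atTop_iff.1 (tendsto_ofSeq.1 hκ.tendsto)
  have hsum : ∑ k : Fin q, ξ ^ (k : ℕ) * A k = 0 := by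
    refine eq_zero_of_mem_weightSubmodule hαB hH hweight ?_
    rwa [Nat.sub_add_cancel (by have := k₀.2; omega), ← mem_bigOSubmodule]
  refine isAlgebraic_of_sum_eq_zero
    (c := fun k ↦ ⟨A k, monomialSpan_le_powAlgebra hαB.pos _ (A k).2⟩) (fun h ↦ hk₀ ?_) hsum
  exact Subtype.ext (congrArg (powAlgebra α κ).val (congrFun h k₀))

end AlgebraicRelation

section DifferentialEquation

open Polynomial

variable {k R Ω : Type*} [CommRing k] [CommRing R] [Algebra k R] [Field Ω] [Algebra R Ω]
  {D : Derivation k R R} {g : Ω} {N : Ideal R} {x : R}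

/-- `x` is a specialization of `g` modulo the differential ideal `N`: every polynomial relation
satisfied by `g` is satisfied by `x` modulo `N`. -/
structure IsSpecialization (D : Derivation k R R) (g : Ω) (N : Ideal R) (x : R) : Prop where
  apply_mem : ∀ y ∈ N, D y ∈ N
  eval_mem : ∀ p : R[X], aeval g p = 0 → p.eval x ∈ N

variable (D) in
theorem exists_forall_apply_eval_eq (p : R[X]) :
    ∃ q : R[X], ∀ x, D (p.eval x) = q.eval x + p.derivative.eval x * D x := by
  induction p using Polynomial.induction_on' with
  | add p₁ p₂ h₁ h₂ =>
    obtain ⟨q₁, h₁⟩ := h₁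
    obtain ⟨q₂, h₂⟩ := h₂
    refine ⟨q₁ + q₂, fun x ↦ ?_⟩
    simp only [eval_add, map_add, h₁, h₂]
    ring
  | monomial n a =>
    refine ⟨monomial n (D a), fun x ↦ ?_⟩
    simp only [eval_monomial, derivative_monomial, Derivation.leibniz, Derivation.leibniz_pow,
      smul_eq_mul, nsmul_eq_mul]
    ring

theorem exists_aeval_eq_zero_aeval_derivative_ne_zero [CharZero R] [FaithfulSMul R Ω]
    (hg : IsAlgebraic R g) : ∃ F : R[X], aeval g F = 0 ∧ aeval g F.derivative ≠ 0 := by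
  have hR := FaithfulSMul.algebraMap_injective R Ω
  have := hR.isDomain
  obtain ⟨F, ⟨hF, hFg⟩, hmin⟩ := exists_minimalFor_of_wellFoundedLT
    (fun F : R[X] ↦ F ≠ 0 ∧ aeval g F = 0) natDegree hg
  have hdeg : F.natDegree ≠ 0 := by
    intro h
    rw [eq_C_of_natDegree_eq_zero h] at hF hFg
    exact hF (by simpa using hFg)
  refine ⟨F, hFg, fun h ↦ ?_⟩
  have hlt := natDegree_derivative_lt hdeg
  exact (hmin ⟨mt derivative_eq_zero.mp hdeg, h⟩ hlt.le).not_gt hlt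

theorem exists_ne_zero_aeval_mul_eq_algebraMap [FaithfulSMul R Ω] (hg : IsAlgebraic R g) {p : R[X]}
    (hp : aeval g p ≠ 0) : ∃ s : R, s ≠ 0 ∧ ∃ q, aeval g (p * q) = algebraMap R Ω s := by
  have := (FaithfulSMul.algebraMap_injective R Ω).isDomain
  have hpg : IsAlgebraic R (aeval g p) :=
    Algebra.isAlgebraic_adjoin_singleton_iff.mpr hg _ (aeval_mem_adjoin_singleton R g)
  obtain ⟨t, ht, s, hs, hst⟩ :=
    hpg.exists_nonzero_eq_adjoin_mul (mem_nonZeroDivisors_of_ne_zero hp)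
  obtain ⟨q, rfl⟩ := Algebra.adjoin_singleton_eq_range_aeval R (aeval g p) ▸ ht
  refine ⟨s, hs, q.comp p, ?_⟩
  rw [map_mul, aeval_comp]
  exact hst

variable (D) in
/-- Apply `D` to `F x ≡ 0` for a relation `F` of `g` and multiply by the inverse of `F' g`. -/
theorem exists_mul_derivation_sub_eval_mem [CharZero R] [FaithfulSMul R Ω] (hg : IsAlgebraic R g) :
    ∃ s : R, s ≠ 0 ∧ ∃ p : R[X], ∀ (N : Ideal R) (x : R), IsSpecialization D g N x →
      s * D x - p.eval x ∈ N := by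
  obtain ⟨F, hF, hF'⟩ := exists_aeval_eq_zero_aeval_derivative_ne_zero hg
  obtain ⟨s, hs, q, hq⟩ := exists_ne_zero_aeval_mul_eq_algebraMap hg hF'
  obtain ⟨FD, hFD⟩ := exists_forall_apply_eval_eq D F
  refine ⟨s, hs, -(q * FD), fun N x hx ↦ ?_⟩
  have h₁ : (F.derivative * q - C s).eval x ∈ N := hx.eval_mem _ (by simp [hq])
  have h₂ := hx.apply_mem _ (hx.eval_mem F hF)
  rw [hFD] at h₂
  convert sub_mem (N.mul_mem_left (q.eval x) h₂) (N.mul_mem_right (D x) h₁) using 1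
  simp only [eval_neg, eval_mul, eval_sub, eval_C]
  ring

variable (D) in
theorem exists_mul_derivation_iterate_sub_eval_mem [CharZero R] [FaithfulSMul R Ω]
    (hg : IsAlgebraic R g) (n : ℕ) :
    ∃ a : R, a ≠ 0 ∧ ∃ p : R[X], ∀ (N : Ideal R) (x : R), IsSpecialization D g N x →
      a * D^[n] x - p.eval x ∈ N := by
  have := (FaithfulSMul.algebraMap_injective R Ω).isDomain
  induction n with
  | zero => exact ⟨1, one_ne_zero, X, fun N x _ ↦ by simp⟩
  | succ n ih =>
    obtain ⟨a, ha, p, hp⟩ := ih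
    obtain ⟨s, hs, q, hq⟩ := exists_mul_derivation_sub_eval_mem D hg
    obtain ⟨pD, hpD⟩ := exists_forall_apply_eval_eq D p
    refine ⟨a * a * s, mul_ne_zero (mul_ne_zero ha ha) hs,
      C (a * s) * pD + C a * p.derivative * q - C (s * D a) * p, fun N x hx ↦ ?_⟩
    have h₁ := hx.apply_mem _ (hp N x hx)
    rw [map_sub, hpD, Derivation.leibniz, smul_eq_mul, smul_eq_mul,
      ← Function.iterate_succ_apply' (⇑D)] at h₁
    convert sub_mem (add_mem (N.mul_mem_left (a * s) h₁)
      (N.mul_mem_left (a * p.derivative.eval x) (hq N x hx)))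
      (N.mul_mem_left (s * D a) (hp N x hx)) using 1
    simp only [eval_add, eval_sub, eval_mul, eval_C]
    ring

theorem not_linearIndependent_aeval [FaithfulSMul R Ω] (hg : IsAlgebraic R g) (p : ℕ → R[X]) :
    ¬ LinearIndependent R fun n ↦ aeval g (p n) := by
  have := (FaithfulSMul.algebraMap_injective R Ω).isDomain
  let := FractionRing.liftAlgebra R Ω
  have hgK : IsAlgebraic (FractionRing R) g :=
    hg.extendScalars (IsFractionRing.injective R (FractionRing R))
  have : Module.Finite (FractionRing R) (Algebra.adjoin (FractionRing R) {g}) :=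
    .of_fg hgK.isIntegral.fg_adjoin_singleton
  rw [LinearIndependent.iff_fractionRing R (FractionRing R)]
  intro h
  have hmem (n) : aeval g (p n) ∈ Algebra.adjoin (FractionRing R) {g} := by
    rw [← aeval_map_algebraMap (FractionRing R)]
    exact aeval_mem_adjoin_singleton _ _
  have h' : LinearIndependent (FractionRing R)
      fun n ↦ (⟨_, hmem n⟩ : Algebra.adjoin (FractionRing R) {g}) :=
    .of_comp (Subalgebra.val _).toLinearMap h
  have := h'.finite_of_isNoetherian
  exact not_finite ℕ

variable (D) in
/-- The classical linear differential equation of an algebraic function, stated so that one equation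
serves all specializations. -/
theorem exists_sum_mul_derivation_iterate_mem [CharZero R] [FaithfulSMul R Ω]
    (hg : IsAlgebraic R g) : ∃ (I : Finset ℕ) (q : ℕ → R), (∃ n ∈ I, q n ≠ 0) ∧
      ∀ (N : Ideal R) (x : R), IsSpecialization D g N x → ∑ n ∈ I, q n * D^[n] x ∈ N := by
  have := (FaithfulSMul.algebraMap_injective R Ω).isDomain
  choose a ha p hp using exists_mul_derivation_iterate_sub_eval_mem D hg
  obtain ⟨I, c, hc, m, hmI, hcm⟩ := not_linearIndependent_iff.mp (not_linearIndependent_aeval hg p)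
  refine ⟨I, fun n ↦ c n * a n, ⟨m, hmI, mul_ne_zero hcm (ha m)⟩, fun N x hx ↦ ?_⟩
  have h₁ : (∑ n ∈ I, C (c n) * p n).eval x ∈ N :=
    hx.eval_mem _ (by simpa [Algebra.smul_def] using hc)
  have h₂ : ∑ n ∈ I, c n * (a n * D^[n] x - (p n).eval x) ∈ N :=
    sum_mem fun n _ ↦ N.mul_mem_left _ (hp n N x hx)
  convert add_mem h₁ h₂ using 1
  rw [eval_finsetSum, ← Finset.sum_add_distrib]
  exact Finset.sum_congr rfl fun n _ ↦ by rw [eval_mul, eval_C]; ring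

end DifferentialEquation

section WeightDerivation

open AddMonoidAlgebra

variable {k Γ : Type*} [Field k] [AddCommMonoid Γ]

/-- The linear map underlying `weightDerivation`. -/
noncomputable def weightLinearMap (φ : Γ →+ k) : k[Γ] →ₗ[k] k[Γ] where
  toFun p := ofCoeff <| Finsupp.onFinset p.coeff.support (fun a ↦ φ a * p.coeff a) fun _ h ↦
    Finsupp.mem_support_iff.mpr (right_ne_zero_of_mul h)
  map_add' p q := by ext; exact mul_add ..
  map_smul' c p := by ext; exact mul_left_comm ..

theorem weightLinearMap_single (φ : Γ →+ k) (a : Γ) (c : k) :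
    weightLinearMap φ (single a c) = single a (φ a * c) := by
  ext b
  by_cases h : a = b
  · simp [weightLinearMap, h]
  · simp [weightLinearMap, h]

/-- The derivation of the monoid algebra that multiplies the monomial of exponent `a` by `φ a`. -/
noncomputable def weightDerivation (φ : Γ →+ k) : Derivation k k[Γ] k[Γ] :=
  .mk' (weightLinearMap φ) fun p q ↦ by
    simp only [smul_eq_mul]
    induction p using AddMonoidAlgebra.induction_linear with
    | zero => simp only [zero_mul, map_zero, mul_zero, add_zero]
    | add p₁ p₂ h₁ h₂ => rw [add_mul, map_add, map_add, h₁, h₂]; ring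
    | single a c =>
      induction q using AddMonoidAlgebra.induction_linear with
      | zero => simp only [zero_mul, map_zero, mul_zero, add_zero]
      | add q₁ q₂ h₁ h₂ => rw [mul_add, map_add, map_add, h₁, h₂]; ring
      | single b d =>
        simp only [single_mul_single, weightLinearMap_single, map_add, add_comm b a]
        rw [← single_add]
        congr 1
        ring

theorem coeff_weightDerivation (φ : Γ →+ k) (p : k[Γ]) (a : Γ) :
    (weightDerivation φ p).coeff a = φ a * p.coeff a :=
  rfl

theorem coeff_weightDerivation_iterate (φ : Γ →+ k) (p : k[Γ]) (a : Γ) (n : ℕ) :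
    ((weightDerivation φ)^[n] p).coeff a = φ a ^ n * p.coeff a := by
  induction n with
  | zero => simp
  | succ n ih => rw [Function.iterate_succ_apply', coeff_weightDerivation, ih]; ring

variable [LinearOrder Γ] [IsOrderedCancelAddMonoid Γ]

/-- The ideal of elements all of whose exponents are at least `γ`. -/
noncomputable def exponentGEIdeal (k : Type*) [Field k] (hΓ : ∀ a : Γ, 0 ≤ a) (γ : Γ) :
    Ideal k[Γ] where
  carrier := {p | ∀ a ∈ p.coeff.support, γ ≤ a}
  zero_mem' := by simp
  add_mem' {p q} hp hq a ha := by
    rcases Finset.mem_union.mp (Finsupp.support_add ha) with h | h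
    exacts [hp a h, hq a h]
  smul_mem' p q hq a ha := by
    obtain ⟨b, -, c, hc, rfl⟩ := Finset.mem_add.mp (support_coeff_mul_subset p q ha)
    exact (hq c hc).trans (le_add_of_nonneg_left (hΓ b))

theorem coeff_eq_zero_of_mem_exponentGEIdeal {hΓ : ∀ a : Γ, 0 ≤ a} {γ a : Γ} {p : k[Γ]}
    (hp : p ∈ exponentGEIdeal k hΓ γ) (ha : a < γ) : p.coeff a = 0 := by
  by_contra h
  exact ha.not_ge (hp a (Finsupp.mem_support_iff.mpr h))

theorem weightDerivation_mem_exponentGEIdeal (φ : Γ →+ k) (hΓ : ∀ a : Γ, 0 ≤ a) {γ : Γ} {p : k[Γ]}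
    (hp : p ∈ exponentGEIdeal k hΓ γ) : weightDerivation φ p ∈ exponentGEIdeal k hΓ γ := by
  intro a ha
  rw [Finsupp.mem_support_iff, coeff_weightDerivation] at ha
  exact hp a (Finsupp.mem_support_iff.mpr (right_ne_zero_of_mul ha))

theorem coeff_add_mul_of_forall_le {p q : k[Γ]} {a b : Γ} (hp : ∀ i ∈ p.coeff.support, i ≤ a)
    (hq : ∀ i ∈ q.coeff.support, i ≤ b) :
    (p * q).coeff (a + b) = p.coeff a * q.coeff b :=
  coeff_mul_add_of_uniqueAdd fun _ _ hi hj hij ↦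
    (add_eq_add_iff_eq_and_eq (hp _ hi) (hq _ hj)).mp hij

theorem le_add_of_mem_support_coeff_mul {p q : k[Γ]} {a b : Γ} (hp : ∀ i ∈ p.coeff.support, i ≤ a)
    (hq : ∀ i ∈ q.coeff.support, i ≤ b) : ∀ i ∈ (p * q).coeff.support, i ≤ a + b := by
  intro i hi
  obtain ⟨c, hc, d, hd, rfl⟩ := Finset.mem_add.mp (support_coeff_mul_subset p q hi)
  exact add_le_add (hp c hc) (hq d hd)

variable {γ : ℕ → Γ} {c : ℕ → k}

theorem leadingTerm_prod_one_add_single (hγ : ∀ i, 0 < γ i) (j : ℕ) :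
    (∀ a ∈ (∏ i ∈ Finset.range j, (1 + single (γ i) (c i))).coeff.support,
      a ≤ ∑ i ∈ Finset.range j, γ i) ∧
    (∏ i ∈ Finset.range j, (1 + single (γ i) (c i))).coeff (∑ i ∈ Finset.range j, γ i) =
      ∏ i ∈ Finset.range j, c i := by
  have hfactor (i) : ∀ a ∈ (1 + single (γ i) (c i) : k[Γ]).coeff.support, a ≤ γ i := by
    intro a ha
    contrapose! ha
    simp [one_def, ha.ne, ((hγ i).trans ha).ne]
  induction j with
  | zero => simp [one_def]
  | succ j ih =>
    simp only [Finset.prod_range_succ, Finset.sum_range_succ]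
    refine ⟨le_add_of_mem_support_coeff_mul ih.1 (hfactor j), ?_⟩
    rw [coeff_add_mul_of_forall_le ih.1 (hfactor j), ih.2]
    simp [one_def, (hγ j).ne]

theorem coeff_sum_mul_weightDerivation_iterate (φ : Γ →+ k) {I : Finset ℕ} {q : ℕ → k[Γ]} {p : k[Γ]}
    {a b : Γ} (hq : ∀ n ∈ I, ∀ i ∈ (q n).coeff.support, i ≤ a) (hp : ∀ i ∈ p.coeff.support, i ≤ b) :
    (∑ n ∈ I, q n * (weightDerivation φ)^[n] p).coeff (a + b) =
      (∑ n ∈ I, (q n).coeff a * φ b ^ n) * p.coeff b := by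
  rw [coeff_sum, Finsupp.finsetSum_apply, Finset.sum_mul]
  refine Finset.sum_congr rfl fun n hn ↦ ?_
  rw [coeff_add_mul_of_forall_le (hq n hn), coeff_weightDerivation_iterate, mul_assoc]
  intro i hi
  rw [Finsupp.mem_support_iff, coeff_weightDerivation_iterate] at hi
  exact hp i (Finsupp.mem_support_iff.mpr (right_ne_zero_of_mul hi))

/-- The coefficient of the largest exponent of `∑ n ∈ I, q n * D^[n] P` is a polynomial in the
weight of `P`, which takes infinitely many values along the partial products. -/
theorem eq_zero_of_forall_sum_mul_weightDerivation_iterate_mem [LinearOrder k]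
    [IsStrictOrderedRing k] (φ : Γ →+ k) (hΓ : ∀ a : Γ, 0 ≤ a) (hφ : ∀ i, 0 < φ (γ i))
    (hγ : ∀ b, ∃ᶠ j in atTop, b + ∑ i ∈ Finset.range j, γ i < γ j) (hc : ∀ i, c i ≠ 0)
    {I : Finset ℕ} {q : ℕ → k[Γ]}
    (hq : ∀ j, ∑ n ∈ I, q n * (weightDerivation φ)^[n]
      (∏ i ∈ Finset.range j, (1 + single (γ i) (c i))) ∈ exponentGEIdeal k hΓ (γ j)) :
    ∀ n ∈ I, q n = 0 := by
  have hγ0 (i) : 0 < γ i := (hΓ _).lt_of_ne fun h ↦ (hφ i).ne' (by rw [← h, map_zero])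
  by_contra! ⟨m, hm, hqm⟩
  have hsupp : (I.biUnion fun n ↦ (q n).coeff.support).Nonempty := by
    obtain ⟨a, ha⟩ := Finsupp.support_nonempty_iff.mpr (coeff_eq_zero.not.mpr hqm)
    exact ⟨a, Finset.mem_biUnion.mpr ⟨m, hm, ha⟩⟩
  obtain ⟨e, he, hmax⟩ := Finset.exists_max_image _ id hsupp
  obtain ⟨n, hn, hne⟩ := Finset.mem_biUnion.mp he
  have hroot : ∃ᶠ j in atTop, (∑ n ∈ I, Polynomial.monomial n ((q n).coeff e)).IsRoot
      (φ (∑ i ∈ Finset.range j, γ i)) := by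
    refine (hγ e).mono fun j hj ↦ ?_
    obtain ⟨hle, htop⟩ := leadingTerm_prod_one_add_single (c := c) hγ0 j
    have h := coeff_eq_zero_of_mem_exponentGEIdeal (hq j) hj
    rw [coeff_sum_mul_weightDerivation_iterate φ (a := e)
      (fun n hn i hi ↦ hmax i (Finset.mem_biUnion.mpr ⟨n, hn, hi⟩)) hle, htop] at h
    simpa [Polynomial.eval_finsetSum] using
      (mul_eq_zero.mp h).resolve_right (Finset.prod_ne_zero_iff.mpr fun i _ ↦ hc i)
  have hmono : StrictMono fun j ↦ φ (∑ i ∈ Finset.range j, γ i) :=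
    strictMono_nat_of_lt_succ fun j ↦ by
      rw [Finset.sum_range_succ, map_add]
      exact lt_add_of_pos_right _ (hφ j)
  have hzero := Polynomial.eq_zero_of_infinite_isRoot _
    (((Nat.frequently_atTop_iff_infinite.mp hroot).image hmono.injective.injOn).mono
      (Set.image_subset_iff.mpr fun _ h ↦ h))
  have hcoeff := congrArg (Polynomial.coeff · n) hzero
  simp only [Polynomial.finsetSum_coeff, Polynomial.coeff_monomial, Finset.sum_ite_eq',
    Polynomial.coeff_zero, if_pos hn] at hcoeff
  exact Finsupp.mem_support_iff.mp hne hcoeff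

theorem transcendental_of_forall_eval_prod_mem {Ω : Type*} [Field Ω] [Algebra k[Γ] Ω]
    [FaithfulSMul k[Γ] Ω] {g : Ω} [LinearOrder k] [IsStrictOrderedRing k] (φ : Γ →+ k)
    (hΓ : ∀ a : Γ, 0 ≤ a) (hφ : ∀ i, 0 < φ (γ i))
    (hγ : ∀ b, ∃ᶠ j in atTop, b + ∑ i ∈ Finset.range j, γ i < γ j) (hc : ∀ i, c i ≠ 0)
    (hg : ∀ (j : ℕ) (p : Polynomial k[Γ]), p.aeval g = 0 →
      p.eval (∏ i ∈ Finset.range j, (1 + single (γ i) (c i))) ∈ exponentGEIdeal k hΓ (γ j)) :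
    Transcendental k[Γ] g := by
  have : CharZero k[Γ] := charZero_of_injective_algebraMap (algebraMap k k[Γ]).injective
  intro halg
  obtain ⟨I, q, ⟨n, hn, hqn⟩, hq⟩ :=
    exists_sum_mul_derivation_iterate_mem (weightDerivation φ) halg
  exact hqn (eq_zero_of_forall_sum_mul_weightDerivation_iterate_mem φ hΓ hφ hγ hc
    (fun j ↦ hq _ _ ⟨fun _ ↦ weightDerivation_mem_exponentGEIdeal φ hΓ, hg j⟩) n hn)

end WeightDerivation

section HyperExponent

open Hyperreal ArchimedeanClass AddMonoidAlgebra

theorem exists_ofSeq_intCast_eq_coe {f : ℕ → ℤ} (hf : 0 ≤ mk (ofSeq fun t ↦ (f t : ℝ))) :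
    ∃ n : ℤ, ofSeq (fun t ↦ (f t : ℝ)) = (n : ℝ) := by
  obtain ⟨N, hN⟩ := mk_le_mk.mp (mk_one (R := ℝ*) ▸ hf)
  rw [abs_one, nsmul_one, abs_ofSeq] at hN
  have hmem : ∀ᶠ t in hyperfilter ℕ, ∃ n ∈ Set.Icc (-N : ℤ) N, f t = n :=
    (ofSeq_le_ofSeq.mp hN).mono fun t (ht : |(f t : ℝ)| ≤ N) ↦
      ⟨f t, abs_le.mp (by exact_mod_cast ht), rfl⟩
  obtain ⟨n, -, hn⟩ := (Ultrafilter.eventually_exists_mem_iff (Set.finite_Icc _ _)).mp hmem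
  exact ⟨n, ofSeq_eq_ofSeq.mpr (hn.mono fun t ht ↦ congrArg _ ht)⟩

/-- The numbers `e - p e`, for `e` a hypernatural of order at most `T`. When `p` is additive and
fixes the reals, this is a copy of the hypernaturals modulo the standard integers, realised inside
`ℝ*` so that distinct elements are infinitely far apart. -/
def exponentSubmonoid (T : ℝ*) (p : ℝ* →+ ℝ) : AddSubmonoid ℝ* where
  carrier := {x | ∃ f : ℕ → ℕ, mk T ≤ mk (ofSeq fun t ↦ (f t : ℝ)) ∧
    x = ofSeq (fun t ↦ (f t : ℝ)) - p (ofSeq fun t ↦ (f t : ℝ))}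
  zero_mem' := by
    have hzero : ofSeq (fun _ ↦ ((0 : ℕ) : ℝ)) = 0 := congrArg ofSeq (funext fun _ ↦ Nat.cast_zero)
    exact ⟨fun _ ↦ 0, by rw [hzero, mk_zero]; exact le_top, by rw [hzero]; simp⟩
  add_mem' := by
    rintro _ _ ⟨f, hf, rfl⟩ ⟨g, hg, rfl⟩
    have hadd : ofSeq (fun t ↦ ((f t + g t : ℕ) : ℝ)) =
        ofSeq (fun t ↦ (f t : ℝ)) + ofSeq fun t ↦ (g t : ℝ) :=
      congrArg ofSeq (funext fun _ ↦ Nat.cast_add _ _)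
    refine ⟨fun t ↦ f t + g t, ?_, ?_⟩
    · rw [hadd]
      exact (le_min hf hg).trans (min_le_mk_add _ _)
    · rw [hadd, map_add, coe_add]
      ring

variable {T : ℝ*} {p : ℝ* →+ ℝ}

theorem mk_le_mk_of_mem_exponentSubmonoid (hT : mk T ≤ 0) {x : ℝ*}
    (hx : x ∈ exponentSubmonoid T p) : mk T ≤ mk x := by
  obtain ⟨f, hf, rfl⟩ := hx
  exact (le_min hf (hT.trans (archimedeanClassMk_coe_nonneg _))).trans (min_le_mk_sub _ _)

theorem pairwise_exponentSubmonoid_mk_sub_neg (hp : ∀ r : ℝ, p r = r) :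
    (exponentSubmonoid T p : Set ℝ*).Pairwise fun x y ↦ mk (y - x) < 0 := by
  rintro _ ⟨f, -, rfl⟩ _ ⟨g, -, rfl⟩ hxy
  contrapose! hxy
  have hsub : ofSeq (fun t ↦ ((g t - f t : ℤ) : ℝ)) =
      ofSeq (fun t ↦ (g t : ℝ)) - ofSeq fun t ↦ (f t : ℝ) :=
    congrArg ofSeq (funext fun _ ↦ by push_cast; rfl)
  have hfin : 0 ≤ mk (ofSeq fun t ↦ ((g t - f t : ℤ) : ℝ)) := by
    rw [hsub]
    have hsplit := (le_min hxy (archimedeanClassMk_coe_nonneg (p (ofSeq fun t ↦ (g t : ℝ)) -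
      p (ofSeq fun t ↦ (f t : ℝ))))).trans (min_le_mk_add _ _)
    rwa [coe_sub, sub_sub_sub_comm, sub_add_cancel] at hsplit
  obtain ⟨n, hn⟩ := exists_ofSeq_intCast_eq_coe hfin
  have hpn := congrArg p hn
  rw [hp, hsub, map_sub] at hpn
  rw [eq_comm, ← sub_eq_zero, sub_sub_sub_comm, ← hsub, hn, ← coe_sub, hpn, sub_self]

theorem nonneg_of_mem_exponentSubmonoid (hp : ∀ r : ℝ, p r = r) {x : ℝ*}
    (hx : x ∈ exponentSubmonoid T p) : 0 ≤ x := by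
  by_contra! hneg
  have hinf := pairwise_exponentSubmonoid_mk_sub_neg hp hx (zero_mem _) hneg.ne
  obtain ⟨f, -, rfl⟩ := hx
  have ha : 0 ≤ ofSeq fun t ↦ (f t : ℝ) := ofSeq_le_ofSeq.mpr (.of_forall fun t ↦ (f t).cast_nonneg)
  have hfin := (archimedeanClassMk_coe_nonneg _).trans
    (mk_le_mk_of_abs (abs_le_abs_of_nonneg ha (sub_neg.mp hneg).le))
  rw [zero_sub, mk_neg] at hinf
  exact hinf.not_ge ((le_min hfin (archimedeanClassMk_coe_nonneg _)).trans (min_le_mk_sub _ _))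

theorem frequently_add_sum_sub_lt {r : ℝ} {κ : ℕ → ℝ*} (hκ : IsGapScale r T κ) (c : ℕ → ℝ) {b : ℝ*}
    (hb : mk T ≤ mk b) :
    ∃ᶠ j in atTop, b + ∑ i ∈ Finset.range j, (κ i - c i) < κ j - c j := by
  obtain ⟨m, hm⟩ := mk_le_mk.mp hb
  rw [nsmul_eq_mul, abs_of_pos hκ.pos] at hm
  refine (hκ.frequently_lt (m + 1)).mono fun j hj ↦ ?_
  have hT := lt_of_tendsto_atTop (c j - ∑ i ∈ Finset.range j, c i) hκ.tendsto
  have hsum : ((∑ i ∈ Finset.range j, c i : ℝ) : ℝ*) = ∑ i ∈ Finset.range j, (c i : ℝ*) :=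
    map_sum coeRingHom _ _
  rw [coe_sub, hsum] at hT
  rw [Finset.sum_sub_distrib]
  push_cast at hj
  linarith [(le_abs_self b).trans hm]

theorem mk_div_nonneg_of_mk_le (hT : T ≠ 0) {x : ℝ*} (hx : mk T ≤ mk x) : 0 ≤ mk (x / T) := by
  rw [div_eq_mul_inv, mk_mul, ← mk_one, ← mul_inv_cancel₀ hT, mk_mul]
  exact add_le_add_left hx _

/-- The additive map `a ↦ stdPart (a / T)` on a monoid of hyperreals of order at most `T`. -/
noncomputable def stdPartDivHom (Γ : AddSubmonoid ℝ*) (hT : T ≠ 0) (hΓ : ∀ a ∈ Γ, mk T ≤ mk a) :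
    Γ →+ ℝ where
  toFun a := stdPart ((a : ℝ*) / T)
  map_zero' := by simp
  map_add' a b := by
    have hfin (a : Γ) : 0 ≤ mk ((a : ℝ*) / T) := mk_div_nonneg_of_mk_le hT (hΓ a a.2)
    rw [AddSubmonoid.coe_add, add_div, stdPart_add (hfin a) (hfin b)]

theorem stdPart_sub_div_pos (hT : T.Tendsto atTop) {x : ℝ*} (c : ℝ) (hx : T ≤ x)
    (hfin : mk T ≤ mk x) : 0 < stdPart ((x - c) / T) := by
  obtain ⟨hT0, hTinf⟩ := tendsto_atTop_iff.mp hT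
  have hc : mk T ≤ mk (x - c) :=
    (le_min hfin (hTinf.le.trans (archimedeanClassMk_coe_nonneg c))).trans (min_le_mk_sub _ _)
  have hle : ((1 / 2 : ℝ) : ℝ*) ≤ (x - c) / T := by
    have hlt := lt_of_tendsto_atTop (2 * c) hT
    rw [le_div_iff₀ hT0]
    push_cast at hlt ⊢
    linarith
  have hstd := stdPart_monotoneOn (archimedeanClassMk_coe_nonneg _)
    (mk_div_nonneg_of_mk_le hT0.ne' hc) hle
  rw [stdPart_coe] at hstd
  exact one_half_pos.trans_le hstd

section Eval

variable {α : ℝ} {Γ : AddSubmonoid ℝ*}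

/-- The evaluation of a generalized polynomial `∑ cₐ Xᵃ` at `X = α`. -/
noncomputable def hyperEval (h0 : 0 < α) (Γ : AddSubmonoid ℝ*) : ℝ[Γ] →+* ℝ* :=
  liftNCRingHom coeRingHom
    { toFun a := hyperPow α (Multiplicative.toAdd a : Γ)
      map_one' := hyperPow_zero
      map_mul' _ _ := hyperPow_add h0 _ _ } fun _ _ ↦ Commute.all _ _

theorem hyperEval_single (h0 : 0 < α) (a : Γ) (c : ℝ) :
    hyperEval h0 Γ (single a c) = c * hyperPow α a :=
  liftNCRingHom_single ..

theorem hyperEval_eq_sum (h0 : 0 < α) (q : ℝ[Γ]) :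
    hyperEval h0 Γ q = ∑ a ∈ q.coeff.support, (q.coeff a : ℝ*) * hyperPow α a := by
  conv_lhs => rw [← sum_coeff_single q, Finsupp.sum, map_sum]
  simp only [hyperEval_single]

theorem mk_hyperEval_nonneg (h0 : 0 < α) (h1 : α < 1) (hΓ : ∀ a : Γ, 0 ≤ a) (q : ℝ[Γ]) :
    0 ≤ mk (hyperEval h0 Γ q) := by
  rw [hyperEval_eq_sum, ← mk_one (R := ℝ*), ← mem_bigOSubmodule]
  refine Submodule.sum_mem _ fun a _ ↦ ?_
  rw [mem_bigOSubmodule, mk_one, mk_mul]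
  refine add_nonneg (archimedeanClassMk_coe_nonneg _) ?_
  rw [← mk_one (R := ℝ*), ← hyperPow_zero (α := α)]
  exact mk_hyperPow_le_mk_hyperPow h0 h1 (hΓ a)

theorem mk_hyperEval_le (h0 : 0 < α) (h1 : α < 1)
    (hΓ : (Γ : Set ℝ*).Pairwise fun x y ↦ mk (y - x) < 0) {q : ℝ[Γ]} {a : Γ}
    (ha : a ∈ q.coeff.support) :
    mk (hyperEval h0 Γ q) ≤ mk (hyperPow α a) := by
  have hterm (b) (hb : b ∈ q.coeff.support) :
      mk ((q.coeff b : ℝ*) * hyperPow α b) = mk (hyperPow α b) := by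
    rw [mk_mul, archimdeanClassMk_coe (Finsupp.mem_support_iff.mp hb), zero_add]
  have hstrict : StrictMonoOn (mk ∘ fun b : Γ ↦ (q.coeff b : ℝ*) * hyperPow α b)
      q.coeff.support := by
    intro b hb c hc hbc
    simp only [Function.comp_apply, hterm b hb, hterm c hc]
    exact mk_hyperPow_lt_mk_hyperPow h0 h1 hbc (hΓ b.2 c.2 (Subtype.coe_ne_coe.mpr hbc.ne))
  rw [hyperEval_eq_sum, mk_sum ⟨a, ha⟩ hstrict]
  refine (hterm _ (Finset.min'_mem _ _)).trans_le ?_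
  exact mk_hyperPow_le_mk_hyperPow h0 h1 (Finset.min'_le _ _ ha)

theorem hyperEval_injective (h0 : 0 < α) (h1 : α < 1)
    (hΓ : (Γ : Set ℝ*).Pairwise fun x y ↦ mk (y - x) < 0) :
    Function.Injective (hyperEval h0 Γ) := by
  refine (injective_iff_map_eq_zero _).mpr fun q hq ↦ ?_
  by_contra hne
  obtain ⟨a, ha⟩ := Finsupp.support_nonempty_iff.mpr (coeff_eq_zero.not.mpr hne)
  have := mk_hyperEval_le h0 h1 hΓ ha
  rw [hq, mk_zero, top_le_iff, mk_eq_top_iff] at this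
  exact (hyperPow_pos h0 _).ne' this

theorem mem_exponentGEIdeal_of_mk_le (h0 : 0 < α) (h1 : α < 1) (hΓ0 : ∀ a : Γ, 0 ≤ a)
    (hΓ : (Γ : Set ℝ*).Pairwise fun x y ↦ mk (y - x) < 0) {q : ℝ[Γ]} {γ : Γ}
    (hq : mk (hyperPow α γ) ≤ mk (hyperEval h0 Γ q)) : q ∈ exponentGEIdeal ℝ hΓ0 γ := by
  intro a ha
  by_contra! hlt
  have hlt' := mk_hyperPow_lt_mk_hyperPow h0 h1 hlt
    (hΓ a.2 γ.2 (Subtype.coe_ne_coe.mpr hlt.ne))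
  exact (hlt'.trans_le hq).not_ge (mk_hyperEval_le h0 h1 hΓ ha)

theorem eval_mem_exponentGEIdeal (h0 : 0 < α) (h1 : α < 1) (hΓ0 : ∀ a : Γ, 0 ≤ a)
    (hΓ : (Γ : Set ℝ*).Pairwise fun x y ↦ mk (y - x) < 0) {γ : Γ} {P : ℝ[Γ]} {g : ℝ*}
    (hg : mk (hyperPow α γ) ≤ mk (g - hyperEval h0 Γ P)) {q : Polynomial ℝ[Γ]}
    (hq : q.eval₂ (hyperEval h0 Γ) g = 0) : q.eval P ∈ exponentGEIdeal ℝ hΓ0 γ := by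
  have hP := mk_hyperEval_nonneg h0 h1 hΓ0 P
  have hγ : 0 ≤ mk (hyperPow α γ) := by
    rw [← mk_one (R := ℝ*), ← hyperPow_zero (α := α)]
    exact mk_hyperPow_le_mk_hyperPow h0 h1 (hΓ0 γ)
  have hgP : 0 ≤ mk g := by
    simpa only [sub_add_cancel] using (le_min (hγ.trans hg) hP).trans (min_le_mk_add _ _)
  refine mem_exponentGEIdeal_of_mk_le h0 h1 hΓ0 hΓ ?_
  have hsum : hyperEval h0 Γ (q.eval P) = -∑ n ∈ q.support,
      hyperEval h0 Γ (q.coeff n) * (g ^ n - hyperEval h0 Γ P ^ n) := by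
    rw [← Polynomial.eval₂_hom, ← sub_eq_zero, sub_neg_eq_add, ← hq]
    simp only [mul_sub, Finset.sum_sub_distrib, Polynomial.eval₂_eq_sum, Polynomial.sum_def,
      add_sub_cancel]
  rw [hsum, mk_neg, ← mem_bigOSubmodule]
  refine Submodule.sum_mem _ fun n _ ↦ ?_
  rw [mem_bigOSubmodule, mk_mul]
  exact le_add_of_nonneg_of_le (mk_hyperEval_nonneg h0 h1 hΓ0 _) (mk_le_mk_pow_sub_pow hgP hP hg n)

theorem transcendental_range_hyperEval (h0 : 0 < α) (h1 : α < 1) (hΓ0 : ∀ a : Γ, 0 ≤ a)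
    (hΓ : (Γ : Set ℝ*).Pairwise fun x y ↦ mk (y - x) < 0) (φ : Γ →+ ℝ) {γ : ℕ → Γ}
    (hφ : ∀ i, 0 < φ (γ i)) (hγ : ∀ b, ∃ᶠ j in atTop, b + ∑ i ∈ Finset.range j, γ i < γ j)
    {c : ℕ → ℝ} (hc : ∀ i, c i ≠ 0) {g : ℝ*}
    (hg : ∀ j, mk (hyperPow α (γ j)) ≤
      mk (g - ∏ i ∈ Finset.range j, (1 + c i * hyperPow α (γ i)))) :
    Transcendental (hyperEval h0 Γ).toRatAlgHom.range g := by
  let _ : Algebra ℝ[Γ] ℝ* := (hyperEval h0 Γ).toAlgebra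
  have hinj : Function.Injective (algebraMap ℝ[Γ] ℝ*) := hyperEval_injective h0 h1 hΓ
  have : FaithfulSMul ℝ[Γ] ℝ* := (faithfulSMul_iff_algebraMap_injective _ _).mpr hinj
  have htrans : Transcendental ℝ[Γ] g := by
    refine transcendental_of_forall_eval_prod_mem φ hΓ0 hφ hγ hc fun j q hq ↦
      eval_mem_exponentGEIdeal h0 h1 hΓ0 hΓ ?_ hq
    simpa only [map_prod, map_add, map_one, hyperEval_single] using hg j
  exact fun halg ↦ htrans (halg.of_ringHom_of_comp_eq (hyperEval h0 Γ).toRatAlgHom.rangeRestrict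
    (RingHom.id ℝ*) (AlgHom.rangeRestrict_surjective _) Function.injective_id rfl)

end Eval

theorem exists_addMonoidHom_coe_eq : ∃ p : ℝ* →+ ℝ, ∀ x : ℝ, p x = x := by
  have hker : LinearMap.ker (coeRingHom.toRatAlgHom.toLinearMap : ℝ →ₗ[ℚ] ℝ*) = ⊥ :=
    LinearMap.ker_eq_bot.mpr coeRingHom.injective
  obtain ⟨p, hp⟩ := LinearMap.exists_leftInverse_of_injective _ hker
  exact ⟨p.toAddMonoidHom, LinearMap.congr_fun hp⟩

theorem transcendental_powAlgebra {α r : ℝ} (h0 : 0 < α) (h1 : α < 1) {κ : ℕ → ℝ*}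
    (hκ : IsGapScale r T κ) (hnat : ∀ i, ∃ f : ℕ → ℕ, κ i = ofSeq fun t ↦ (f t : ℝ)) {g : ℝ*}
    (hg : ∀ j, mk (hyperPow α (κ j)) ≤ mk (g - ∏ i ∈ Finset.range j, (1 + hyperPow α (κ i)))) :
    Transcendental (powAlgebra α κ) g := by
  obtain ⟨p, hp⟩ := exists_addMonoidHom_coe_eq
  obtain ⟨hT0, hTinf⟩ := tendsto_atTop_iff.mp hκ.tendsto
  let Γ := exponentSubmonoid T p
  have hT (a) (ha : a ∈ Γ) : mk T ≤ mk a := mk_le_mk_of_mem_exponentSubmonoid hTinf.le ha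
  let γ (i : ℕ) : Γ := ⟨κ i - p (κ i), by
    obtain ⟨f, hf⟩ := hnat i
    exact ⟨f, hf ▸ hκ.mk_le i, by rw [hf]⟩⟩
  have hpow (i : ℕ) : hyperPow α (κ i) = (α ^ p (κ i) : ℝ) * hyperPow α (γ i) := by
    rw [← hyperPow_coe, ← hyperPow_add h0, add_sub_cancel]
  have hc (i : ℕ) : α ^ p (κ i) ≠ 0 := (Real.rpow_pos_of_pos h0 _).ne'
  have hφ (i : ℕ) : 0 < stdPartDivHom Γ hT0.ne' hT (γ i) :=
    stdPart_sub_div_pos hκ.tendsto _ (hκ.le i) (hκ.mk_le i)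
  have hgap (b : Γ) : ∃ᶠ j in atTop, b + ∑ i ∈ Finset.range j, γ i < γ j := by
    refine (frequently_add_sum_sub_lt hκ (fun i ↦ p (κ i)) (hT b b.2)).mono fun j hj ↦ ?_
    rwa [← Subtype.coe_lt_coe, AddSubmonoid.coe_add, AddSubmonoid.coe_finsetSum]
  have htrans : Transcendental (hyperEval h0 Γ).toRatAlgHom.range g := by
    refine transcendental_range_hyperEval h0 h1 (fun a ↦ nonneg_of_mem_exponentSubmonoid hp a.2)
      (pairwise_exponentSubmonoid_mk_sub_neg hp) _ hφ hgap hc fun j ↦ ?_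
    simpa only [hpow, mk_mul, archimdeanClassMk_coe (hc _), zero_add] using hg j
  refine fun halg ↦ htrans (halg.tower_top_of_subalgebra_le (Algebra.adjoin_le ?_))
  rintro _ ⟨i, rfl⟩
  exact ⟨single (γ i) (α ^ p (κ i)), (hyperEval_single h0 _ _).trans (hpow i).symm⟩

end HyperExponent

section Transcendence

open Hyperreal ArchimedeanClass Polynomial Topology

variable {α : ℝ} {B : Multiset ℂ} {k : ℕ → ℕ}

theorem ofSeq_sparseProd_mem_weightSubmodule (hB : ∀ β ∈ B, 1 < ‖β‖) (hk : StrictMono k)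
    (n : ℕ → ℕ) : ofSeq (fun t ↦ sparseProd k α (n t)) ∈
      weightSubmodule α B (fun t ↦ ∑ i ∈ Finset.range (n t), k i) 1 := by
  obtain ⟨C, -, hC⟩ := exists_forall_norm_sparseProd_le hB hk
  refine ⟨1, one_ne_zero, fun t ↦ sparseProd k X (n t), ?_, fun β hβ ↦ .of_bound C ?_⟩
  · simp only [Nat.cast_one, one_mul, aeval_sparseProd_X]
  · refine .of_forall fun t ↦ ?_
    rw [aeval_sparseProd_X, one_mul, norm_pow, norm_norm]
    exact hC β hβ (n t)

theorem mk_hyperPow_le_mk_div_sparseProd_sub (h0 : 0 < α) {L C : ℝ}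
    (hC : ∀ N, |L - sparseProd k α N| ≤ C * α ^ k N) (n : ℕ → ℕ) (j : ℕ) :
    mk (hyperPow α (ofSeq fun t ↦ (k (n t + j) : ℝ))) ≤
      mk (L / ofSeq (fun t ↦ sparseProd k α (n t)) -
        ∏ i ∈ Finset.range j, (1 + hyperPow α (ofSeq fun t ↦ (k (n t + i) : ℝ)))) := by
  have hprod : ∏ i ∈ Finset.range j, (1 + hyperPow α (ofSeq fun t ↦ (k (n t + i) : ℝ))) =
      ofSeq fun t ↦ ∏ i ∈ Finset.range j, (1 + α ^ k (n t + i)) := by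
    simp only [← Real.rpow_natCast]
    exact (ofSeq_prod (.range j) fun i t ↦ 1 + α ^ (k (n t + i) : ℝ)).symm
  rw [hprod, hyperPow_ofSeq]
  refine mk_ofSeq_le_mk_ofSeq.2 (.of_bound C (.of_forall fun t ↦ ?_))
  have h1 := one_le_sparseProd (k := k) h0 (n t)
  have hsplit : sparseProd k α (n t + j) =
      sparseProd k α (n t) * ∏ i ∈ Finset.range j, (1 + α ^ k (n t + i)) :=
    Finset.prod_range_add ..
  change ‖L / sparseProd k α (n t) - _‖ ≤ _
  rw [Real.norm_of_nonneg (Real.rpow_nonneg h0.le _), Real.rpow_natCast]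
  refine le_trans ?_ (hC (n t + j))
  rw [hsplit, div_sub' (by positivity), norm_div, Real.norm_eq_abs]
  exact div_le_self (abs_nonneg _) (h1.trans (le_abs_self _))

theorem exists_forall_pow_mul_le {r c : ℝ} (hr : 0 < r) (hrc : r < c) {H : ℕ → ℝ}
    (hH : ∀ n, 0 ≤ H n) (hratio : (fun n ↦ H (n + 1)) =O[atTop] H)
    (hgrow : ∃ᶠ n in atTop, c ^ n ≤ H n) :
    ∃ n : ℕ → ℕ, ∀ t, t ≤ n t ∧ ∀ J ≤ t, r ^ J * H (n t) ≤ H (n t + J) := by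
  choose n hn using fun t ↦
    (frequently_forall_pow_mul_le hr hrc hH hratio hgrow t).forall_exists_of_atTop t
  exact ⟨n, hn⟩

theorem transcendental_of_tendsto_sparseProd (hαB : IsExpandingConjugates α B) (hk : StrictMono k)
    {c : ℝ} (hc : 2 < c) (hgrow : ∃ᶠ n in atTop, c ^ n ≤ ∑ i ∈ Finset.range n, (k i : ℝ)) {L : ℝ}
    (hL : Tendsto (sparseProd k α) atTop (𝓝 L)) : Transcendental ℚ L := by
  intro halg
  obtain ⟨L', C, hL', hC⟩ := exists_tendsto_sparseProd hαB.pos hαB.lt_one hk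
  obtain rfl := tendsto_nhds_unique hL hL'
  obtain ⟨d, M, hdM⟩ := exists_eventually_le_mul_sum_add_of_isAlgebraic hαB hk hL hC halg
  have hratio := isBigO_sum_succ_of_eventually_le hk hdM
  obtain ⟨r, hr, hrc⟩ := exists_between hc
  obtain ⟨n, hn⟩ := exists_forall_pow_mul_le (zero_lt_two.trans hr) hrc
    (fun _ ↦ Nat.cast_nonneg _) hratio (by exact_mod_cast hgrow)
  have hκ := isGapScale_ofSeq hr hk hratio (fun t ↦ (hn t).1) fun t ↦ (hn t).2
  set ξ := ofSeq fun t ↦ sparseProd k α (n t)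
  have hξ1 : ofSeq (fun _ ↦ 1) ≤ ξ := ofSeq_le_ofSeq.2 (.of_forall fun t ↦
    one_le_sparseProd hαB.pos (n t))
  have hξ0 : ξ ≠ 0 := (zero_lt_one.trans_le hξ1).ne'
  have hnat (i : ℕ) : ∃ f : ℕ → ℕ, ofSeq (fun t ↦ (k (n t + i) : ℝ)) = ofSeq fun t ↦ (f t : ℝ) :=
    ⟨_, rfl⟩
  have hg := mk_hyperPow_le_mk_div_sparseProd_sub hαB.pos hC n
  have hξalg := isAlgebraic_powAlgebra halg hαB hκ hnat
    (ofSeq_sparseProd_mem_weightSubmodule hαB.one_lt_norm hk n) (mul_div_cancel₀ _ hξ0) hg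
  have hLalg : IsAlgebraic ℚ (L : ℝ*) := halg.algHom coeRingHom.toRatAlgHom
  refine transcendental_powAlgebra hαB.pos hαB.lt_one hκ hnat hg ?_
  rw [div_eq_mul_inv]
  exact (hLalg.extendScalars (algebraMap ℚ _).injective).mul hξalg.inv

theorem prod_Icc_one_add_zpow_neg {ψ : ℝ} (h : ℕ → ℕ) (N : ℕ) :
    ∏ n ∈ Finset.Icc 1 N, (1 + ψ ^ (-(h n : ℤ))) = sparseProd (fun i ↦ h (i + 1)) ψ⁻¹ N := by
  rw [sparseProd, Finset.range_eq_Ico, Finset.prod_Ico_add' (fun n ↦ 1 + ψ⁻¹ ^ h n) 0 N 1]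
  simp only [zpow_neg, zpow_natCast, inv_pow]
  rfl

theorem frequently_pow_le_sum_range_succ {c : ℝ} {h : ℕ → ℕ}
    (hgrow : ∃ᶠ n : ℕ in atTop, c ^ n ≤ (h n : ℝ)) :
    ∃ᶠ n : ℕ in atTop, c ^ n ≤ ∑ i ∈ Finset.range n, (h (i + 1) : ℝ) := by
  refine (hgrow.and_eventually (eventually_ge_atTop 1)).mono fun n ⟨hn, h1⟩ ↦ hn.trans ?_
  obtain ⟨m, rfl⟩ := Nat.exists_eq_add_of_le' h1
  exact Finset.single_le_sum (f := fun i ↦ (h (i + 1) : ℝ)) (fun _ _ ↦ Nat.cast_nonneg _)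
    (Finset.self_mem_range_succ m)

theorem stmt_19_general {ψ : ℝ} (hψ : IsPisotUnit ψ) {c : ℝ} (hc : 2 < c) {h : ℕ → ℕ}
    (hmono : ∀ n : ℕ, 1 ≤ n → h n < h (n + 1))
    (hgrow : ∃ᶠ n : ℕ in atTop, c ^ n ≤ (h n : ℝ)) :
    ∃ L : ℝ,
      Tendsto (fun N => ∏ n ∈ Finset.Icc 1 N, (1 + ψ ^ (-(h n : ℤ)))) atTop (𝓝 L) ∧
      Transcendental ℚ L := by
  have hαB := hψ.isExpandingConjugates_inv
  have hk : StrictMono fun i ↦ h (i + 1) :=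
    strictMono_nat_of_lt_succ fun i ↦ hmono (i + 1) i.succ_pos
  obtain ⟨L, -, hL, -⟩ := exists_tendsto_sparseProd hαB.pos hαB.lt_one hk
  refine ⟨L, ?_, transcendental_of_tendsto_sparseProd hαB hk hc
    (frequently_pow_le_sum_range_succ hgrow) hL⟩
  simpa only [prod_Icc_one_add_zpow_neg] using hL

end Transcendence

/-- (Example `trans of psi`.) Let `ψ` be the supergolden ratio,
the unique real root of `x³ - x² - 1`. If `{h_n}` is a strictly increasing
sequence of positive integers with `h_n ≥ (8/3)^n` infinitely often, then
`∏ (1 + ψ^(-h_n))` converges to a transcendental number. -/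
theorem stmt_19 (ψ : ℝ) (hψ : ψ ^ 3 - ψ ^ 2 - 1 = 0)
    (h : ℕ → ℕ)
    (hpos : ∀ n : ℕ, 1 ≤ n → 0 < h n)
    (hmono : ∀ n : ℕ, 1 ≤ n → h n < h (n + 1))
    (hgrow : ∃ᶠ n : ℕ in atTop, ((8 : ℝ) / 3) ^ n ≤ (h n : ℝ)) :
    ∃ L : ℝ,
      Tendsto (fun N => ∏ n ∈ Finset.Icc 1 N, (1 + ψ ^ (-(h n : ℤ)))) atTop (nhds L) ∧
      Transcendental ℚ L :=
  stmt_19_general (isPisotUnit_of_supergolden hψ) (by norm_num) hmono hgrow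
end
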